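/- Let A ⊆ B be a C*-subalgebra such that the positive cone A⁺ residually supports B, and let F ⊆ A⁺ be a subset that residually supports the C*-algebra A (with respect to the ideals of A). Assume that the set of restricted ideals of A is finite, or that the projections contained in F separate the restricted ideals of A (i.e. any two restricted ideals of A containing exactly the same projections of F are equal; this is automatic when F consists of projections). Then the following are equivalent: (1) every nonzero element of F is properly infinite in B; (2) B is purely infinite; (3) B is purely infinite and has the ideal property; (4) B is strongly purely infinite. -/

import Mathlib

/- Common definitions for C*-inclusions, ideals, Cuntz subequivalence,
   supporting/filling families and pure infiniteness. -/

namespace KM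

variable {B : Type*} [NonUnitalCStarAlgebra B] [PartialOrder B]

/-- `J` is a closed two-sided ideal of the C*-algebra `C` (given as a subset of `B`). -/
def IsIdealIn (C J : Set B) : Prop :=
  J ⊆ C ∧ IsClosed J ∧ (0 : B) ∈ J ∧ (∀ x ∈ J, ∀ y ∈ J, x + y ∈ J) ∧
    (∀ (c : ℂ), ∀ x ∈ J, c • x ∈ J) ∧ (∀ x ∈ J, ∀ c ∈ C, c * x ∈ J ∧ x * c ∈ J)

/-- `J` is a closed two-sided ideal of `B`. -/
def IsIdeal (J : Set B) : Prop := IsIdealIn Set.univ J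

/-- `A` is a C*-subalgebra of `B`: a closed `*`-subalgebra. -/
def IsSubCStar (A : Set B) : Prop :=
  IsClosed A ∧ (0 : B) ∈ A ∧ (∀ x ∈ A, ∀ y ∈ A, x + y ∈ A) ∧
    (∀ (c : ℂ), ∀ x ∈ A, c • x ∈ A) ∧ (∀ x ∈ A, ∀ y ∈ A, x * y ∈ A) ∧
    (∀ x ∈ A, star x ∈ A)

/-- The smallest closed two-sided ideal of the C*-algebra `C` containing `S`. -/
def idealGenIn (C S : Set B) : Set B := ⋂₀ {J : Set B | IsIdealIn C J ∧ S ⊆ J}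

/-- The smallest closed two-sided ideal of `B` containing `S`; for an ideal `I` of a
subalgebra `A` this is the induced ideal `BIB`. -/
def idealGen (S : Set B) : Set B := idealGenIn Set.univ S

/-- `I` is a restricted ideal of the subalgebra `A`, i.e. `I = J ∩ A` for an ideal `J` of `B`. -/
def IsRestricted (A I : Set B) : Prop := ∃ J : Set B, IsIdeal J ∧ I = J ∩ A

/-- `J` is an induced ideal of `B`: `J = BIB` for some ideal `I` of `A`. -/
def IsInduced (A J : Set B) : Prop := ∃ I : Set B, IsIdealIn A I ∧ J = idealGen I

/-- `A` separates ideals in `B`. -/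
def SeparatesIdeals (A : Set B) : Prop :=
  ∀ J₁ J₂ : Set B, IsIdeal J₁ → IsIdeal J₂ → J₁ ∩ A = J₂ ∩ A → J₁ = J₂

/-- Cuntz subequivalence `a ≼ b`. -/
def CuntzBelow (a b : B) : Prop :=
  ∀ ε : ℝ, 0 < ε → ∃ x : B, ‖a - star x * b * x‖ < ε

/-- `F` supports `B`. -/
def Supports (F : Set B) : Prop :=
  ∀ b : B, 0 ≤ b → b ≠ 0 → ∃ a ∈ F, a ≠ 0 ∧ CuntzBelow a b

/-- `F` residually supports the C*-algebra `C ⊆ B`: for every ideal `J` of `C`, the image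
of `F` in `C/J` supports `C/J`, phrased concretely via the distance to `J`. -/
def ResiduallySupportsIn (C F : Set B) : Prop :=
  ∀ J : Set B, IsIdealIn C J → ∀ b ∈ C, 0 ≤ b → b ∉ J →
    ∃ a ∈ F, a ∉ J ∧ ∀ ε : ℝ, 0 < ε → ∃ x ∈ C,
      Metric.infDist (a - star x * b * x) J < ε

/-- `F` residually supports `B`. -/
def ResiduallySupports (F : Set B) : Prop := ResiduallySupportsIn Set.univ F

/-- `x` lies in `aB = {a c : c ∈ B}`. -/
def MemRightMul (a x : B) : Prop := ∃ c : B, x = a * c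

/-- `a` is properly infinite in `B`. -/
def ProperlyInfinite (a : B) : Prop :=
  ∀ ε : ℝ, 0 < ε → ∃ x y : B, MemRightMul a x ∧ MemRightMul a y ∧
    ‖star x * x - a‖ ≤ ε ∧ ‖star y * y - a‖ ≤ ε ∧ ‖star x * y‖ ≤ ε

/-- `a` is infinite in `B`. -/
def InfiniteElt (a : B) : Prop :=
  ∃ b : B, 0 ≤ b ∧ b ≠ 0 ∧ ∀ ε : ℝ, 0 < ε → ∃ x y : B,
    MemRightMul a x ∧ MemRightMul a y ∧
    ‖star x * x - a‖ ≤ ε ∧ ‖star y * y - b‖ ≤ ε ∧ ‖star x * y‖ ≤ ε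

/-- The pair `a, b` is separated in `B`. -/
def SeparatedPair (a b : B) : Prop :=
  ∀ ε : ℝ, 0 < ε → ∃ x y : B, MemRightMul a x ∧ MemRightMul b y ∧
    ‖star x * x - a‖ ≤ ε ∧ ‖star y * y - b‖ ≤ ε ∧ ‖star x * y‖ ≤ ε

/-- A character of `B`: a nonzero multiplicative linear functional `B → ℂ`. -/
def IsCharacter (φ : B →ₗ[ℂ] ℂ) : Prop :=
  (∀ x y : B, φ (x * y) = φ x * φ y) ∧ φ ≠ 0

/-- `B` is purely infinite: it admits no characters and for nonzero positive `a, b`,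
`a ≼ b` iff `a` lies in the ideal generated by `b`. -/
def PurelyInfinite (B : Type*) [NonUnitalCStarAlgebra B] [PartialOrder B] : Prop :=
  (¬ ∃ φ : B →ₗ[ℂ] ℂ, IsCharacter φ) ∧
    ∀ a b : B, 0 ≤ a → a ≠ 0 → 0 ≤ b → b ≠ 0 → (CuntzBelow a b ↔ a ∈ idealGen {b})

/-- `p` is a projection. -/
def IsProjection (p : B) : Prop := star p = p ∧ p * p = p

/-- `B` has the ideal property: projections separate ideals. -/
def IdealProperty (B : Type*) [NonUnitalCStarAlgebra B] [PartialOrder B] : Prop :=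
  ∀ J₁ J₂ : Set B, IsIdeal J₁ → IsIdeal J₂ →
    (∀ p : B, IsProjection p → (p ∈ J₁ ↔ p ∈ J₂)) → J₁ = J₂

/-- `B` is strongly purely infinite: every pair of positive elements is separated. -/
def StronglyPurelyInfinite (B : Type*) [NonUnitalCStarAlgebra B] [PartialOrder B] : Prop :=
  ∀ a b : B, 0 ≤ a → 0 ≤ b → SeparatedPair a b

/-- `D` is a hereditary C*-subalgebra of `B`. -/
def IsHereditary (D : Set B) : Prop :=
  IsSubCStar D ∧ ∀ b d : B, d ∈ D → 0 ≤ b → b ≤ d → b ∈ D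

/-- `F` fills `B`. -/
def Fills (F : Set B) : Prop :=
  ∀ D : Set B, IsHereditary D → (∃ d ∈ D, d ≠ 0) →
    ∀ J : Set B, IsIdeal J → ¬ D ⊆ J →
      ∃ z : B, z ∉ J ∧ z * star z ∈ D ∧ star z * z ∈ F

/-- Closed linear span of a subset of `B`. -/
def closSpan (S : Set B) : Set B := closure ↑(Submodule.span ℂ S)

/-- The C*-inclusion `A ⊆ B` is symmetric. -/
def SymmetricInclusion (A : Set B) : Prop :=
  ∀ I : Set B, IsRestricted A I →
    closSpan {z : B | ∃ x ∈ I, ∃ b : B, z = x * b} =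
      closSpan {z : B | ∃ b : B, ∃ x ∈ I, z = b * x}

/-- `b` is a normaliser of `A` in `B`. -/
def IsNormalizer (A : Set B) (b : B) : Prop :=
  (∀ a ∈ A, b * a * star b ∈ A) ∧ (∀ a ∈ A, star b * a * b ∈ A)

/-- The inclusion `A ⊆ B` is nondegenerate: the closed span of `A·B` is `B`. -/
def Nondegenerate (A : Set B) : Prop :=
  closSpan {z : B | ∃ a ∈ A, ∃ b : B, z = a * b} = Set.univ

/-- The inclusion `A ⊆ B` is regular: nondegenerate and `B` is the closed linear span of
the normalisers of `A`. -/
def RegularInclusion (A : Set B) : Prop :=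
  Nondegenerate A ∧ closSpan {b : B | IsNormalizer A b} = Set.univ

end KM

set_option linter.unusedSectionVars false
set_option linter.unusedVariables false
namespace KM
section basics
variable {B : Type*} [NonUnitalCStarAlgebra B] [PartialOrder B]

namespace IsIdeal
variable {K : Set B}

lemma zero_mem (hK : IsIdeal K) : (0 : B) ∈ K := hK.2.2.1
lemma isClosed (hK : IsIdeal K) : IsClosed K := hK.2.1
lemma add_mem (hK : IsIdeal K) {x y : B} (hx : x ∈ K) (hy : y ∈ K) : x + y ∈ K :=
  hK.2.2.2.1 x hx y hy
lemma smul_mem (hK : IsIdeal K) (c : ℂ) {x : B} (hx : x ∈ K) : c • x ∈ K :=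
  hK.2.2.2.2.1 c x hx
lemma rsmul_mem (hK : IsIdeal K) (c : ℝ) {x : B} (hx : x ∈ K) : c • x ∈ K := by
  have := hK.smul_mem (c : ℂ) hx
  simpa using this
lemma mul_left (hK : IsIdeal K) (c : B) {x : B} (hx : x ∈ K) : c * x ∈ K :=
  (hK.2.2.2.2.2 x hx c (Set.mem_univ c)).1
lemma mul_right (hK : IsIdeal K) (c : B) {x : B} (hx : x ∈ K) : x * c ∈ K :=
  (hK.2.2.2.2.2 x hx c (Set.mem_univ c)).2
lemma neg_mem (hK : IsIdeal K) {x : B} (hx : x ∈ K) : -x ∈ K := by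
  have := hK.smul_mem (-1) hx
  simpa using this
lemma sub_mem (hK : IsIdeal K) {x y : B} (hx : x ∈ K) (hy : y ∈ K) : x - y ∈ K := by
  rw [sub_eq_add_neg]; exact hK.add_mem hx (hK.neg_mem hy)
lemma sum_mem (hK : IsIdeal K) {ι : Type*} (s : Finset ι) (f : ι → B) (h : ∀ i ∈ s, f i ∈ K) :
    ∑ i ∈ s, f i ∈ K := by
  classical
  induction s using Finset.induction_on with
  | empty => simpa using hK.zero_mem
  | insert a s ha ih =>
    rw [Finset.sum_insert ha]
    exact hK.add_mem (h _ (Finset.mem_insert_self _ _))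
      (ih fun i hi => h i (Finset.mem_insert_of_mem hi))
lemma nonempty (hK : IsIdeal K) : K.Nonempty := ⟨0, hK.zero_mem⟩
lemma mem_of_approx (hK : IsIdeal K) {x : B} (h : ∀ ε : ℝ, 0 < ε → ∃ k ∈ K, ‖x - k‖ < ε) :
    x ∈ K := by
  have : x ∈ closure K := by
    rw [Metric.mem_closure_iff]
    intro ε hε
    obtain ⟨k, hk, h1⟩ := h ε hε
    exact ⟨k, hk, by rwa [dist_eq_norm]⟩
  rwa [hK.isClosed.closure_eq] at this
lemma add_mem_left_iff (hK : IsIdeal K) {x y : B} (hy : y ∈ K) : x + y ∈ K ↔ x ∈ K :=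
  ⟨fun h => by simpa using hK.sub_mem h hy, fun h => hK.add_mem h hy⟩

end IsIdeal

lemma mk_isIdeal {K : Set B} (h1 : IsClosed K) (h2 : (0 : B) ∈ K)
    (h3 : ∀ x ∈ K, ∀ y ∈ K, x + y ∈ K) (h4 : ∀ (c : ℂ), ∀ x ∈ K, c • x ∈ K)
    (h5 : ∀ x ∈ K, ∀ c : B, c * x ∈ K) (h6 : ∀ x ∈ K, ∀ c : B, x * c ∈ K) : IsIdeal K :=
  ⟨Set.subset_univ _, h1, h2, h3, h4, fun x hx c _ => ⟨h5 x hx c, h6 x hx c⟩⟩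

lemma isIdeal_zero : IsIdeal ({0} : Set B) := by
  refine mk_isIdeal isClosed_singleton rfl ?_ ?_ ?_ ?_ <;> simp +contextual

lemma isIdeal_univ : IsIdeal (Set.univ : Set B) := by
  refine mk_isIdeal isClosed_univ ?_ ?_ ?_ ?_ ?_ <;> simp

lemma isIdeal_inter {K L : Set B} (hK : IsIdeal K) (hL : IsIdeal L) : IsIdeal (K ∩ L) := by
  refine mk_isIdeal (hK.isClosed.inter hL.isClosed) ⟨hK.zero_mem, hL.zero_mem⟩ ?_ ?_ ?_ ?_
  · intro x hx y hy; exact ⟨hK.add_mem hx.1 hy.1, hL.add_mem hx.2 hy.2⟩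
  · intro c x hx; exact ⟨hK.smul_mem c hx.1, hL.smul_mem c hx.2⟩
  · intro x hx c; exact ⟨hK.mul_left c hx.1, hL.mul_left c hx.2⟩
  · intro x hx c; exact ⟨hK.mul_right c hx.1, hL.mul_right c hx.2⟩

lemma isIdeal_sInter {S : Set (Set B)} (hS : ∀ K ∈ S, IsIdeal K) : IsIdeal (⋂₀ S) := by
  refine mk_isIdeal (isClosed_sInter fun K hK => (hS K hK).isClosed) ?_ ?_ ?_ ?_ ?_
  · intro K hK; exact (hS K hK).zero_mem
  · intro x hx y hy K hK; exact (hS K hK).add_mem (hx K hK) (hy K hK)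
  · intro c x hx K hK; exact (hS K hK).smul_mem c (hx K hK)
  · intro x hx c K hK; exact (hS K hK).mul_left c (hx K hK)
  · intro x hx c K hK; exact (hS K hK).mul_right c (hx K hK)

lemma isIdeal_gen (S : Set B) : IsIdeal (idealGen S) :=
  isIdeal_sInter fun _ hK => hK.1

lemma mem_gen (a : B) : a ∈ idealGen {a} := fun _ hK => hK.2 rfl

lemma gen_subset {K : Set B} (hK : IsIdeal K) {a : B} (ha : a ∈ K) : idealGen {a} ⊆ K :=
  Set.sInter_subset_of_mem ⟨hK, by simpa using ha⟩

/-- closure of an algebraic two-sided ideal -/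
lemma isIdeal_closure {K : Set B} (h2 : (0 : B) ∈ K)
    (h3 : ∀ x ∈ K, ∀ y ∈ K, x + y ∈ K) (h4 : ∀ (c : ℂ), ∀ x ∈ K, c • x ∈ K)
    (h5 : ∀ x ∈ K, ∀ c : B, c * x ∈ K) (h6 : ∀ x ∈ K, ∀ c : B, x * c ∈ K) :
    IsIdeal (closure K) := by
  refine mk_isIdeal isClosed_closure (subset_closure h2) ?_ ?_ ?_ ?_
  · intro x hx y hy
    exact map_mem_closure₂ continuous_add hx hy h3
  · intro c x hx
    exact map_mem_closure (continuous_const_smul c) hx (h4 c)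
  · intro x hx c
    exact map_mem_closure (continuous_const_mul c) hx (fun x hx => h5 x hx c)
  · intro x hx c
    exact map_mem_closure (f := fun x => x * c) (continuous_mul_const c) hx (fun x hx => h6 x hx c)

/-- closed sum of ideals -/
def isum (K L : Set B) : Set B := closure {z | ∃ k ∈ K, ∃ l ∈ L, z = k + l}

lemma isIdeal_isum {K L : Set B} (hK : IsIdeal K) (hL : IsIdeal L) : IsIdeal (isum K L) := by
  refine isIdeal_closure ⟨0, hK.zero_mem, 0, hL.zero_mem, by simp⟩ ?_ ?_ ?_ ?_
  · rintro _ ⟨k, hk, l, hl, rfl⟩ _ ⟨k', hk', l', hl', rfl⟩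
    exact ⟨_, hK.add_mem hk hk', _, hL.add_mem hl hl', by abel⟩
  · rintro c _ ⟨k, hk, l, hl, rfl⟩
    exact ⟨_, hK.smul_mem c hk, _, hL.smul_mem c hl, by simp⟩
  · rintro _ ⟨k, hk, l, hl, rfl⟩ c
    exact ⟨_, hK.mul_left c hk, _, hL.mul_left c hl, by simp [mul_add]⟩
  · rintro _ ⟨k, hk, l, hl, rfl⟩ c
    exact ⟨_, hK.mul_right c hk, _, hL.mul_right c hl, by simp [add_mul]⟩

lemma left_subset_isum {K L : Set B} (hL : IsIdeal L) : K ⊆ isum K L :=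
  fun k hk => subset_closure ⟨k, hk, 0, hL.zero_mem, by simp⟩
lemma right_subset_isum {K L : Set B} (hK : IsIdeal K) : L ⊆ isum K L :=
  fun l hl => subset_closure ⟨0, hK.zero_mem, l, hl, by simp⟩

/-- closure of the union of a chain of ideals -/
lemma isIdeal_chain {c : Set (Set B)} (hne : c.Nonempty) (hc : IsChain (· ⊆ ·) c)
    (hI : ∀ K ∈ c, IsIdeal K) : IsIdeal (closure (⋃₀ c)) := by
  obtain ⟨K0, hK0⟩ := hne
  refine isIdeal_closure ⟨K0, hK0, (hI K0 hK0).zero_mem⟩ ?_ ?_ ?_ ?_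
  · rintro x ⟨K, hK, hx⟩ y ⟨L, hL, hy⟩
    rcases hc.total hK hL with h | h
    · exact ⟨L, hL, (hI L hL).add_mem (h hx) hy⟩
    · exact ⟨K, hK, (hI K hK).add_mem hx (h hy)⟩
  · rintro c x ⟨K, hK, hx⟩; exact ⟨K, hK, (hI K hK).smul_mem c hx⟩
  · rintro x ⟨K, hK, hx⟩ c; exact ⟨K, hK, (hI K hK).mul_left c hx⟩
  · rintro x ⟨K, hK, hx⟩ c; exact ⟨K, hK, (hI K hK).mul_right c hx⟩

/-- quotient seminorm -/
noncomputable def q (K : Set B) (x : B) : ℝ := Metric.infDist x K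

section q
variable {K : Set B}

lemma q_lt_iff (hK : IsIdeal K) {x : B} {r : ℝ} : q K x < r ↔ ∃ k ∈ K, ‖x - k‖ < r := by
  unfold q
  rw [Metric.infDist_lt_iff hK.nonempty]
  simp [dist_eq_norm]

lemma q_nonneg (x : B) : 0 ≤ q K x := Metric.infDist_nonneg

lemma q_le_of_mem {x k : B} (hk : k ∈ K) : q K x ≤ ‖x - k‖ := by
  rw [← dist_eq_norm]; exact Metric.infDist_le_dist_of_mem hk

lemma q_le_norm (hK : IsIdeal K) (x : B) : q K x ≤ ‖x‖ := by
  simpa using q_le_of_mem (x := x) hK.zero_mem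

lemma q_eq_zero (hK : IsIdeal K) {x : B} (hx : x ∈ K) : q K x = 0 :=
  Metric.infDist_zero_of_mem hx

lemma mem_of_q_zero (hK : IsIdeal K) {x : B} (h : ∀ ε : ℝ, 0 < ε → q K x < ε) : x ∈ K :=
  hK.mem_of_approx fun ε hε => (q_lt_iff hK).1 (h ε hε)

lemma q_add (hK : IsIdeal K) (x y : B) : q K (x + y) ≤ q K x + q K y := by
  refine le_of_forall_pos_lt_add fun ε hε => ?_
  obtain ⟨k, hk, h1⟩ := (q_lt_iff hK (x := x) (r := q K x + ε / 2)).1 (by linarith)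
  obtain ⟨l, hl, h2⟩ := (q_lt_iff hK (x := y) (r := q K y + ε / 2)).1 (by linarith)
  refine (q_lt_iff hK).2 ⟨k + l, hK.add_mem hk hl, ?_⟩
  have : x + y - (k + l) = (x - k) + (y - l) := by abel
  rw [this]
  linarith [norm_add_le (x - k) (y - l)]

lemma q_smul_le (hK : IsIdeal K) (c : ℂ) (x : B) : q K (c • x) ≤ ‖c‖ * q K x := by
  refine le_of_forall_pos_le_add fun ε hε => ?_
  have hc : 0 < ‖c‖ + 1 := by positivity
  obtain ⟨k, hk, h1⟩ := (q_lt_iff hK (x := x) (r := q K x + ε / (‖c‖ + 1))).1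
    (by linarith [div_pos hε hc])
  refine (q_le_of_mem (hK.smul_mem c hk)).trans ?_
  rw [← smul_sub, norm_smul]
  have h2 : ‖c‖ * (ε / (‖c‖ + 1)) ≤ ε := by
    rw [mul_div_assoc', div_le_iff₀ hc]; nlinarith [norm_nonneg c]
  nlinarith [norm_nonneg c]

lemma q_rsmul_le (hK : IsIdeal K) {c : ℝ} (hc : 0 ≤ c) (x : B) : q K (c • x) ≤ c * q K x := by
  have := q_smul_le hK (c : ℂ) x
  simpa [abs_of_nonneg hc] using this

lemma q_neg (hK : IsIdeal K) (x : B) : q K (-x) = q K x := by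
  apply le_antisymm
  · have := q_smul_le hK (-1) x
    simpa using this
  · have := q_smul_le hK (-1) (-x)
    simpa using this

lemma q_sub_comm (hK : IsIdeal K) (x y : B) : q K (x - y) = q K (y - x) := by
  rw [← q_neg hK, neg_sub]

lemma q_sub (hK : IsIdeal K) (x y : B) : q K (x - y) ≤ q K x + q K y := by
  rw [sub_eq_add_neg, ← q_neg hK y]; exact q_add hK _ _

lemma q_tri (hK : IsIdeal K) (x y z : B) : q K (x - z) ≤ q K (x - y) + q K (y - z) := by
  have := q_add hK (x - y) (y - z)
  simpa using this

lemma q_mul_left (hK : IsIdeal K) (y x : B) : q K (y * x) ≤ ‖y‖ * q K x := by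
  refine le_of_forall_pos_le_add fun ε hε => ?_
  have hc : 0 < ‖y‖ + 1 := by positivity
  obtain ⟨k, hk, h1⟩ := (q_lt_iff hK (x := x) (r := q K x + ε / (‖y‖ + 1))).1
    (by linarith [div_pos hε hc])
  refine (q_le_of_mem (hK.mul_left y hk)).trans ?_
  rw [← mul_sub]
  have h2 : ‖y‖ * (ε / (‖y‖ + 1)) ≤ ε := by
    rw [mul_div_assoc', div_le_iff₀ hc]; nlinarith [norm_nonneg y]
  have := norm_mul_le y (x - k)
  nlinarith [norm_nonneg y]

lemma q_mul_right (hK : IsIdeal K) (y x : B) : q K (x * y) ≤ q K x * ‖y‖ := by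
  refine le_of_forall_pos_le_add fun ε hε => ?_
  have hc : 0 < ‖y‖ + 1 := by positivity
  obtain ⟨k, hk, h1⟩ := (q_lt_iff hK (x := x) (r := q K x + ε / (‖y‖ + 1))).1
    (by linarith [div_pos hε hc])
  refine (q_le_of_mem (hK.mul_right y hk)).trans ?_
  rw [← sub_mul]
  have h2 : ‖y‖ * (ε / (‖y‖ + 1)) ≤ ε := by
    rw [mul_div_assoc', div_le_iff₀ hc]; nlinarith [norm_nonneg y]
  have := norm_mul_le (x - k) y
  nlinarith [norm_nonneg y]

lemma q_mono {L : Set B} (hK : IsIdeal K) (h : K ⊆ L) (x : B) : q L x ≤ q K x :=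
  Metric.infDist_le_infDist_of_subset h hK.nonempty

lemma q_zero_ideal (x : B) : q ({0} : Set B) x = ‖x‖ := by
  simp [q, dist_eq_norm]

lemma q_congr (hK : IsIdeal K) {x y : B} (h : x - y ∈ K) : q K x = q K y := by
  apply le_antisymm
  · have := q_add hK (x - y) y
    rw [q_eq_zero hK h] at this; simpa using this
  · have := q_add hK (y - x) x
    rw [← neg_sub, q_neg hK, q_eq_zero hK h] at this; simpa using this

end q
end basics
end KM

set_option linter.unusedSectionVars false
set_option linter.unusedVariables false
namespace KM
section fc
variable {B : Type*} [NonUnitalCStarAlgebra B] [PartialOrder B] [StarOrderedRing B]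

/-- continuous functions vanishing at zero -/
def CZ (f : ℝ → ℝ) : Prop := Continuous f ∧ f 0 = 0

/-- continuous functional calculus -/
noncomputable abbrev fc (f : ℝ → ℝ) (a : B) : B := cfcₙ f a

lemma CZ.mul {f g : ℝ → ℝ} (hf : CZ f) (hg : CZ g) : CZ (fun t => f t * g t) :=
  ⟨hf.1.mul hg.1, by simp [hf.2]⟩
lemma CZ.add {f g : ℝ → ℝ} (hf : CZ f) (hg : CZ g) : CZ (fun t => f t + g t) :=
  ⟨hf.1.add hg.1, by simp [hf.2, hg.2]⟩
lemma CZ.sub {f g : ℝ → ℝ} (hf : CZ f) (hg : CZ g) : CZ (fun t => f t - g t) :=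
  ⟨hf.1.sub hg.1, by simp [hf.2, hg.2]⟩
lemma CZ.id : CZ (fun t => t) := ⟨continuous_id, rfl⟩
lemma CZ.smul {f : ℝ → ℝ} (c : ℝ) (hf : CZ f) : CZ (fun t => c * f t) :=
  ⟨continuous_const.mul hf.1, by simp [hf.2]⟩

lemma fc_mul {f g : ℝ → ℝ} (hf : CZ f) (hg : CZ g) (a : B) :
    fc f a * fc g a = fc (fun t => f t * g t) a :=
  (cfcₙ_mul f g a hf.1.continuousOn hf.2 hg.1.continuousOn hg.2).symm
lemma fc_add {f g : ℝ → ℝ} (hf : CZ f) (hg : CZ g) (a : B) :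
    fc f a + fc g a = fc (fun t => f t + g t) a :=
  (cfcₙ_add f g a hf.1.continuousOn hf.2 hg.1.continuousOn hg.2).symm
lemma fc_sub {f g : ℝ → ℝ} (hf : CZ f) (hg : CZ g) (a : B) :
    fc f a - fc g a = fc (fun t => f t - g t) a :=
  (cfcₙ_sub f g a hf.1.continuousOn hf.2 hg.1.continuousOn hg.2).symm
lemma fc_smul {f : ℝ → ℝ} (c : ℝ) (hf : CZ f) (a : B) :
    c • fc f a = fc (fun t => c * f t) a :=
  (cfcₙ_const_mul c f a hf.1.continuousOn hf.2).symm
lemma fc_id {a : B} (ha : IsSelfAdjoint a) : fc (fun t => t) a = a := cfcₙ_id' ℝ a ha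
lemma fc_sa (f : ℝ → ℝ) (a : B) : IsSelfAdjoint (fc f a) := cfcₙ_predicate f a
lemma fc_star (f : ℝ → ℝ) (a : B) : star (fc f a) = fc f a := (fc_sa f a).star_eq
lemma fc_congr {f g : ℝ → ℝ} {a : B} (ha : 0 ≤ a) (h : ∀ t, 0 ≤ t → t ≤ ‖a‖ → f t = g t) :
    fc f a = fc g a := by
  apply cfcₙ_congr
  intro t ht
  refine h t (quasispectrum_nonneg_of_nonneg a ha t ht) ?_
  exact (le_abs_self t).trans
    (NonUnitalIsometricContinuousFunctionalCalculus.norm_quasispectrum_le a ht (.of_nonneg ha))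
lemma fc_nonneg {f : ℝ → ℝ} {a : B} (ha : 0 ≤ a) (h : ∀ t, 0 ≤ t → t ≤ ‖a‖ → 0 ≤ f t) :
    0 ≤ fc f a := by
  apply cfcₙ_nonneg
  intro t ht
  refine h t (quasispectrum_nonneg_of_nonneg a ha t ht) ?_
  exact (le_abs_self t).trans
    (NonUnitalIsometricContinuousFunctionalCalculus.norm_quasispectrum_le a ht (.of_nonneg ha))
lemma fc_nonneg_sa {f : ℝ → ℝ} {a : B} (h : ∀ t, 0 ≤ f t) : 0 ≤ fc f a :=
  cfcₙ_nonneg fun t _ => h t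
lemma fc_norm {f : ℝ → ℝ} {a : B} (ha : 0 ≤ a) {c : ℝ} (hc : 0 ≤ c)
    (h : ∀ t, 0 ≤ t → t ≤ ‖a‖ → |f t| ≤ c) : ‖fc f a‖ ≤ c := by
  apply norm_cfcₙ_le
  intro t ht
  refine h t (quasispectrum_nonneg_of_nonneg a ha t ht) ?_
  exact (le_abs_self t).trans
    (NonUnitalIsometricContinuousFunctionalCalculus.norm_quasispectrum_le a ht (.of_nonneg ha))
lemma fc_norm_sa {f : ℝ → ℝ} {a : B} {c : ℝ} (hc : 0 ≤ c)
    (h : ∀ t, |f t| ≤ c) : ‖fc f a‖ ≤ c := by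
  apply norm_cfcₙ_le
  intro t ht
  exact h t
lemma fc_le {f g : ℝ → ℝ} (hf : CZ f) (hg : CZ g) {a : B} (ha : 0 ≤ a)
    (h : ∀ t, 0 ≤ t → t ≤ ‖a‖ → f t ≤ g t) : fc f a ≤ fc g a := by
  rw [← sub_nonneg, fc_sub hg hf]
  exact fc_nonneg ha fun t h0 h1 => sub_nonneg.2 (h t h0 h1)

lemma norm_star_mul (x : B) : ‖star x * x‖ = ‖x‖ ^ 2 := by
  rw [CStarRing.norm_star_mul_self, sq]
lemma norm_mul_star (x : B) : ‖x * star x‖ = ‖x‖ ^ 2 := by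
  rw [CStarRing.norm_self_mul_star, sq]

lemma exists_sqrt {a : B} (ha : 0 ≤ a) : ∃ r : B, 0 ≤ r ∧ star r = r ∧ r * r = a :=
  ⟨CFC.sqrt a, CFC.sqrt_nonneg a, (IsSelfAdjoint.of_nonneg (CFC.sqrt_nonneg a)).star_eq,
    CFC.sqrt_mul_sqrt_self a ha⟩

/-- conjugation by one minus u -/
def cj (u d : B) : B := d - u * d - d * u + u * d * u

lemma cj_star_mul {u : B} (hu : star u = u) (x : B) :
    star (x - x * u) * (x - x * u) = cj u (star x * x) := by
  simp only [cj, star_sub, star_mul, hu, mul_sub, sub_mul, mul_assoc]; abel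

lemma cj_nonneg {u d : B} (hu : star u = u) (hd : 0 ≤ d) : 0 ≤ cj u d := by
  obtain ⟨r, -, hr, rfl⟩ := exists_sqrt hd
  have := cj_star_mul hu r
  rw [hr] at this
  rw [← this]; exact star_mul_self_nonneg _

lemma cj_sub (u d e : B) : cj u (d - e) = cj u d - cj u e := by
  simp only [cj, mul_sub, sub_mul]; abel
lemma cj_add (u d e : B) : cj u (d + e) = cj u d + cj u e := by
  simp only [cj, mul_add, add_mul]; abel

lemma cj_le {u d e : B} (hu : star u = u) (hd : d ≤ e) : cj u d ≤ cj u e := by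
  rw [← sub_nonneg, ← cj_sub]; exact cj_nonneg hu (sub_nonneg.2 hd)

/-- the approximate unit function -/
noncomputable def uf (η : ℝ) : ℝ → ℝ := fun t => t / (|t| + η)

lemma uf_CZ {η : ℝ} (hη : 0 < η) : CZ (uf η) := by
  constructor
  · unfold uf
    refine continuous_id.div (by fun_prop) fun t => ?_
    have := abs_nonneg t
    simp; linarith
  · simp [uf]

lemma uf_nonneg {s : B} (hs : 0 ≤ s) {η : ℝ} (hη : 0 < η) : 0 ≤ fc (uf η) s :=
  fc_nonneg hs fun t ht _ => by unfold uf; positivity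

lemma uf_norm {s : B} (hs : 0 ≤ s) {η : ℝ} (hη : 0 < η) : ‖fc (uf η) s‖ ≤ 1 :=
  fc_norm hs zero_le_one fun t ht _ => by
    unfold uf
    rw [abs_of_nonneg (by positivity), abs_of_nonneg ht, div_le_one (by linarith)]
    linarith

lemma uf_cj {s : B} (hs : 0 ≤ s) {η : ℝ} (hη : 0 < η) : ‖cj (fc (uf η) s) s‖ ≤ η := by
  have h : cj (fc (uf η) s) s = fc (fun t => t - uf η t * t - t * uf η t + uf η t * t * uf η t) s := by
    have hid := fc_id (IsSelfAdjoint.of_nonneg hs)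
    have hu := uf_CZ hη
    unfold cj
    rw [← fc_add ((CZ.id.sub (hu.mul CZ.id)).sub (CZ.id.mul hu)) ((hu.mul CZ.id).mul hu),
      ← fc_sub (CZ.id.sub (hu.mul CZ.id)) (CZ.id.mul hu), ← fc_sub CZ.id (hu.mul CZ.id),
      ← fc_mul (hu.mul CZ.id) hu, ← fc_mul CZ.id hu, ← fc_mul hu CZ.id, hid]
  rw [h]
  refine fc_norm hs hη.le fun t ht _ => ?_
  have h1 : t - uf η t * t - t * uf η t + uf η t * t * uf η t = η * (t * η / (t + η) ^ 2) := by
    unfold uf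
    rw [abs_of_nonneg ht]
    have : t + η ≠ 0 := by positivity
    field_simp
    ring
  rw [h1, abs_of_nonneg (by positivity)]
  have : t * η / (t + η) ^ 2 ≤ 1 := by
    rw [div_le_one (by positivity)]; nlinarith
  nlinarith

lemma uf_mem {J : Set B} (hJ : IsIdeal J) {s : B} (hs : 0 ≤ s) (hsJ : s ∈ J) {η : ℝ} (hη : 0 < η) :
    fc (uf η) s ∈ J := by
  have h : fc (uf η) s = η⁻¹ • (s - s * fc (uf η) s) := by
    have hid := fc_id (IsSelfAdjoint.of_nonneg hs)
    have hu := uf_CZ hη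
    nth_rewrite 2 [← hid]
    nth_rewrite 3 [← hid]
    rw [fc_mul CZ.id hu, fc_sub CZ.id (CZ.id.mul hu), fc_smul _ (CZ.id.sub (CZ.id.mul hu))]
    refine fc_congr hs fun t ht _ => ?_
    unfold uf
    rw [abs_of_nonneg ht]
    have : t + η ≠ 0 := by positivity
    field_simp
    ring
  rw [h]
  exact hJ.rsmul_mem _ (hJ.sub_mem hsJ (hJ.mul_right _ hsJ))

lemma IsIdeal.star_mem {J : Set B} (hJ : IsIdeal J) {l : B} (hl : l ∈ J) : star l ∈ J := by
  refine hJ.mem_of_approx fun ε hε => ?_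
  have hs : 0 ≤ star l * l := star_mul_self_nonneg l
  have hη : 0 < (ε / 2) ^ 2 := by positivity
  set u := fc (uf ((ε / 2) ^ 2)) (star l * l) with hu
  have huJ : u ∈ J := uf_mem hJ hs (hJ.mul_left _ hl) hη
  have hus : star u = u := fc_star _ _
  refine ⟨u * star l, hJ.mul_right _ huJ, ?_⟩
  have h1 : ‖l - l * u‖ ^ 2 ≤ (ε / 2) ^ 2 := by
    rw [← norm_star_mul, cj_star_mul hus]
    exact uf_cj hs hη
  have h2 := abs_le_of_sq_le_sq h1 (by positivity)
  have h3 : star l - u * star l = star (l - l * u) := by simp [hus]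
  rw [h3, norm_star]
  have := (abs_le.1 (abs_le_of_sq_le_sq h1 (by positivity))).2
  linarith

lemma q_star {K : Set B} (hK : IsIdeal K) (x : B) : q K (star x) = q K x := by
  have key : ∀ y : B, q K (star y) ≤ q K y := by
    intro y
    refine le_of_forall_pos_le_add fun ε hε => ?_
    obtain ⟨k, hk, h⟩ := (q_lt_iff hK (x := y) (r := q K y + ε)).1 (by linarith)
    refine (q_le_of_mem (hK.star_mem hk)).trans ?_
    rw [← star_sub, norm_star]; exact h.le
  exact le_antisymm (key x) (by simpa using key (star x))

/-- approximate units on finite sets -/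
lemma exists_au {J : Set B} (hJ : IsIdeal J) (S : Finset B) (hS : ∀ l ∈ S, l ∈ J) {ε : ℝ}
    (hε : 0 < ε) : ∃ u ∈ J, 0 ≤ u ∧ star u = u ∧ ‖u‖ ≤ 1 ∧ ∀ l ∈ S, ‖l - l * u‖ ≤ ε ∧ ‖l - u * l‖ ≤ ε := by
  set s : B := ∑ l ∈ S, (star l * l + l * star l) with hs
  have h0 : ∀ l ∈ S, 0 ≤ star l * l + l * star l := fun l _ =>
    add_nonneg (star_mul_self_nonneg l) (mul_star_self_nonneg l)
  have hs0 : 0 ≤ s := Finset.sum_nonneg h0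
  have hsJ : s ∈ J := hJ.sum_mem _ _ fun l hl =>
    hJ.add_mem (hJ.mul_left _ (hS l hl)) (hJ.mul_right _ (hS l hl))
  have hη : 0 < ε ^ 2 := by positivity
  set u := fc (uf (ε ^ 2)) s with hu
  have hus : star u = u := fc_star _ _
  have hc := uf_cj hs0 hη
  refine ⟨u, uf_mem hJ hs0 hsJ hη, uf_nonneg hs0 hη, hus, uf_norm hs0 hη, fun l hl => ?_⟩
  have hls : star l * l + l * star l ≤ s := Finset.single_le_sum h0 hl
  have key : ∀ x : B, star x * x ≤ s → ‖x - x * u‖ ≤ ε := by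
    intro x hx
    have h1 : ‖x - x * u‖ ^ 2 ≤ ε ^ 2 := by
      rw [← norm_star_mul, cj_star_mul hus]
      exact (CStarAlgebra.norm_le_norm_of_nonneg_of_le (cj_nonneg hus (star_mul_self_nonneg x))
        (cj_le hus hx)).trans hc
    exact (abs_le.1 (abs_le_of_sq_le_sq h1 hε.le)).2
  refine ⟨key l (le_trans (le_add_of_nonneg_right (mul_star_self_nonneg l)) hls), ?_⟩
  have h3 : l - u * l = star (star l - star l * u) := by simp [hus]
  rw [h3, norm_star]
  refine key _ (le_trans ?_ hls)
  rw [star_star]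
  exact le_add_of_nonneg_left (star_mul_self_nonneg l)

/-- contraction property -/
lemma norm_sub_mul_le {u : B} (hu : 0 ≤ u) (hu1 : ‖u‖ ≤ 1) (m : B) : ‖m - u * m‖ ≤ ‖m‖ := by
  have hus : star u = u := (IsSelfAdjoint.of_nonneg hu).star_eq
  have h0 : 0 ≤ u + u - u * u := by
    have hid := fc_id (IsSelfAdjoint.of_nonneg hu)
    have : u + u - u * u = fc (fun t => t + t - t * t) u := by
      rw [← fc_sub (CZ.id.add CZ.id) (CZ.id.mul CZ.id), ← fc_add CZ.id CZ.id, ← fc_mul CZ.id CZ.id,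
        hid]
    rw [this]
    exact fc_nonneg hu fun t h0 h1 => by nlinarith
  have h1 : star m * m - star (m - u * m) * (m - u * m) = star m * (u + u - u * u) * m := by
    simp only [star_sub, star_mul, hus, mul_sub, sub_mul, mul_add, add_mul, mul_assoc]; abel
  have h2 : star (m - u * m) * (m - u * m) ≤ star m * m := by
    rw [← sub_nonneg, h1]; exact star_left_conjugate_nonneg h0 m
  have h3 := CStarAlgebra.norm_le_norm_of_nonneg_of_le (star_mul_self_nonneg _) h2
  rw [norm_star_mul, norm_star_mul] at h3
  exact (abs_le.1 (abs_le_of_sq_le_sq h3 (norm_nonneg m))).2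

lemma norm_sub_mul_le' {u : B} (hu : 0 ≤ u) (hu1 : ‖u‖ ≤ 1) (m : B) : ‖m - m * u‖ ≤ ‖m‖ := by
  have hus : star u = u := (IsSelfAdjoint.of_nonneg hu).star_eq
  have := norm_sub_mul_le hu hu1 (star m)
  rw [← norm_star] at this
  simpa [hus] using this

lemma cj_eq (u d : B) : cj u d = (d - u * d) - (d - u * d) * u := by
  simp only [cj, sub_mul]; abel

lemma norm_cj_le {u : B} (hu : 0 ≤ u) (hu1 : ‖u‖ ≤ 1) (m : B) : ‖cj u m‖ ≤ ‖m‖ := by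
  rw [cj_eq]
  exact (norm_sub_mul_le' hu hu1 _).trans (norm_sub_mul_le hu hu1 m)

lemma q_sq_le {K : Set B} (hK : IsIdeal K) (x : B) : q K x ^ 2 ≤ q K (star x * x) := by
  refine le_of_forall_pos_le_add fun ε hε => ?_
  obtain ⟨k, hk, h⟩ := (q_lt_iff hK (x := star x * x) (r := q K (star x * x) + ε / 2)).1 (by linarith)
  obtain ⟨u, huK, hu0, hus, hu1, hu⟩ := exists_au hK {k} (by simpa using hk) (half_pos hε)
  have hu := (hu k (by simp)).2
  have h1 : q K x ≤ ‖x - x * u‖ := q_le_of_mem (hK.mul_left _ huK)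
  have h2 : ‖x - x * u‖ ^ 2 = ‖cj u (star x * x - k) + cj u k‖ := by
    rw [← norm_star_mul, cj_star_mul hus, cj_sub]; simp
  have h3 : ‖cj u k‖ ≤ ε / 2 := by
    rw [cj_eq]; exact (norm_sub_mul_le' hu0 hu1 _).trans hu
  have h4 := norm_cj_le hu0 hu1 (star x * x - k)
  have h5 := norm_add_le (cj u (star x * x - k)) (cj u k)
  have h6 : q K x ^ 2 ≤ ‖x - x * u‖ ^ 2 := pow_le_pow_left₀ (q_nonneg x) h1 2
  linarith

lemma mem_of_star_mul_mem {K : Set B} (hK : IsIdeal K) {x : B} (h : star x * x ∈ K) : x ∈ K := by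
  have h1 := q_sq_le hK x
  rw [q_eq_zero hK h] at h1
  have h2 : q K x = 0 := by have := q_nonneg (K := K) x; nlinarith
  exact mem_of_q_zero hK fun ε hε => by rw [h2]; exact hε

lemma sqrt_mem {K : Set B} (hK : IsIdeal K) {r : B} (hr : star r = r) (h : r * r ∈ K) : r ∈ K :=
  mem_of_star_mul_mem hK (by rwa [hr])

lemma mem_of_le {K : Set B} (hK : IsIdeal K) {g T : B} (hg : 0 ≤ g) (h : g ≤ T) (hT : T ∈ K) :
    g ∈ K := by
  obtain ⟨r, hr0, hrs, rfl⟩ := exists_sqrt hg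
  have hT0 : 0 ≤ T := hg.trans h
  refine hK.mul_left _ (hK.mem_of_approx fun ε hε => ?_)
  have hη : 0 < (ε / 2) ^ 2 := by positivity
  set u := fc (uf ((ε / 2) ^ 2)) T with hu
  have hus : star u = u := fc_star _ _
  refine ⟨r * u, hK.mul_left _ (uf_mem hK hT0 hT hη), ?_⟩
  have h1 : ‖r - r * u‖ ^ 2 ≤ (ε / 2) ^ 2 := by
    rw [← norm_star_mul, cj_star_mul hus, hrs]
    exact (CStarAlgebra.norm_le_norm_of_nonneg_of_le (cj_nonneg hus hg)
        (cj_le hus h)).trans (uf_cj hT0 hη)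
  have := (abs_le.1 (abs_le_of_sq_le_sq h1 (by positivity))).2
  linarith

/-- an ideal as a closed star subalgebra -/
def IsIdeal.toSub {J : Set B} (hJ : IsIdeal J) : NonUnitalStarSubalgebra ℂ B where
  carrier := J
  add_mem' := hJ.add_mem
  zero_mem' := hJ.zero_mem
  mul_mem' := fun _ h => hJ.mul_left _ h
  smul_mem' := fun c _ h => hJ.smul_mem c h
  star_mem' := hJ.star_mem

lemma fc_mem {J : Set B} (hJ : IsIdeal J) {s : B} (hs : s ∈ J) (f : ℝ → ℝ) : fc f s ∈ J := by
  have hcl : IsClosed (hJ.toSub : Set B) := hJ.isClosed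
  exact cfcₙ_mem (𝕜 := ℝ) (𝕜' := ℂ) (s := hJ.toSub) f (a := s) hs

end fc
end KM

set_option linter.unusedSectionVars false
set_option linter.unusedVariables false
namespace KM
section sub
variable {B : Type*} [NonUnitalCStarAlgebra B] [PartialOrder B] [StarOrderedRing B]

noncomputable def phf (η : ℝ) : ℝ → ℝ := fun t => 1 - √(η / (|t| + η))

lemma phf_CZ {η : ℝ} (hη : 0 < η) : CZ (phf η) := by
  constructor
  · unfold phf
    refine continuous_const.sub (Real.continuous_sqrt.comp (continuous_const.div (by fun_prop) fun t => ?_))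
    have := abs_nonneg t
    positivity
  · simp [phf, hη.ne']

lemma phf_sq {η t : ℝ} (hη : 0 < η) (ht : 0 ≤ t) : (1 - phf η t) ^ 2 = η / (t + η) := by
  unfold phf
  rw [sub_sub_cancel, Real.sq_sqrt (by positivity), abs_of_nonneg ht]

lemma phf_mem {η t : ℝ} (hη : 0 < η) : 0 ≤ phf η t ∧ phf η t ≤ 1 := by
  unfold phf
  have h : √(η / (|t| + η)) ≤ 1 := by
    rw [Real.sqrt_le_one]
    exact div_le_one_of_le₀ (by linarith [abs_nonneg t]) (by positivity)
  constructor
  · linarith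
  · linarith [Real.sqrt_nonneg (η / (|t| + η))]

lemma cj_fc {f : ℝ → ℝ} (hf : CZ f) {s : B} (hs : 0 ≤ s) :
    cj (fc f s) s = fc (fun t => t - f t * t - t * f t + f t * t * f t) s := by
  have hid := fc_id (IsSelfAdjoint.of_nonneg hs)
  unfold cj
  rw [← fc_add ((CZ.id.sub (hf.mul CZ.id)).sub (CZ.id.mul hf)) ((hf.mul CZ.id).mul hf),
      ← fc_sub (CZ.id.sub (hf.mul CZ.id)) (CZ.id.mul hf), ← fc_sub CZ.id (hf.mul CZ.id),
      ← fc_mul (hf.mul CZ.id) hf, ← fc_mul CZ.id hf, ← fc_mul hf CZ.id, hid]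

lemma ord_lemma {g T m : B} (hg : 0 ≤ g) (hT : 0 ≤ T) {η : ℝ} (hη : 0 < η) (h : g ≤ T + m)
    (hm : ‖m‖ ≤ η) : ∃ w : B, ‖w‖ ^ 2 ≤ 2 ∧ ‖g - star w * T * w‖ ≤ 2 * η := by
  obtain ⟨r, hr0, hrs, rfl⟩ := exists_sqrt hg
  have hf := phf_CZ hη
  set P := fc (phf η) T with hP
  have hPs : star P = P := fc_star _ _
  have hP0 : 0 ≤ P := fc_nonneg hT fun t _ _ => (phf_mem hη).1
  have hP1 : ‖P‖ ≤ 1 := fc_norm hT zero_le_one fun t _ _ => by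
    rw [abs_of_nonneg (phf_mem hη).1]; exact (phf_mem hη).2
  have hc : cj P T = fc (fun t => t - phf η t * t - t * phf η t + phf η t * t * phf η t) T := cj_fc hf hT
  have hval : ∀ t, 0 ≤ t → t - phf η t * t - t * phf η t + phf η t * t * phf η t = t * (η / (t + η)) := by
    intro t ht; rw [← phf_sq hη ht]; ring
  have hc1 : ‖cj P T‖ ≤ η := by
    rw [hc]
    refine fc_norm hT hη.le fun t ht _ => ?_
    rw [hval t ht, abs_of_nonneg (by positivity), mul_div_assoc', div_le_iff₀ (by positivity)]
    nlinarith
  have hc2 : cj P T = η • (P + P - P * P) := by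
    rw [hc, hP, fc_mul hf hf, fc_add hf hf, fc_sub (hf.add hf) (hf.mul hf),
      fc_smul _ ((hf.add hf).sub (hf.mul hf))]
    refine fc_congr hT fun t ht _ => ?_
    rw [hval t ht]
    have h1 := phf_sq hη ht
    have h2 : t * (η / (t + η)) = η * (1 - η / (t + η)) := by
      have : t + η ≠ 0 := by positivity
      field_simp
      ring
    rw [h2, ← h1]; ring
  set w0 := r - P * r with hw0
  have hsq : (√η)⁻¹ * (√η)⁻¹ = η⁻¹ := by rw [← mul_inv, Real.mul_self_sqrt hη.le]
  have hw0s : ‖w0‖ ^ 2 ≤ 2 * η := by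
    have h1 : w0 = star (r - r * P) := by simp [hw0, hPs, hrs]
    rw [h1, norm_star, ← norm_star_mul, cj_star_mul hPs, hrs]
    refine (CStarAlgebra.norm_le_norm_of_nonneg_of_le (cj_nonneg hPs hg) (cj_le hPs h)).trans ?_
    rw [cj_add]
    have := norm_add_le (cj P T) (cj P m)
    have := norm_cj_le hP0 hP1 m
    linarith
  refine ⟨(√η)⁻¹ • w0, ?_, ?_⟩
  · rw [norm_smul, mul_pow, Real.norm_eq_abs, sq_abs, sq, hsq]
    rw [inv_mul_le_iff₀ hη]; linarith
  · have h1 : r * r - star ((√η)⁻¹ • w0) * T * ((√η)⁻¹ • w0) = star w0 * w0 := by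
      have e1 : star ((√η)⁻¹ • w0) * T * ((√η)⁻¹ • w0) = η⁻¹ • (r * cj P T * r) := by
        have : star w0 * T * w0 = r * cj P T * r := by
          simp only [hw0, cj, star_sub, star_mul, hPs, hrs, mul_sub, sub_mul, mul_add, add_mul, mul_assoc]
          abel
        rw [← this, star_smul, smul_mul_assoc, smul_mul_assoc, mul_smul_comm, smul_smul]
        simp [hsq]
      rw [e1, hc2, mul_smul_comm, smul_mul_assoc, smul_smul, inv_mul_cancel₀ hη.ne', one_smul]
      simp only [hw0, star_sub, star_mul, hPs, hrs, mul_sub, sub_mul, mul_add, add_mul, mul_assoc]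
      abel
    rw [h1, norm_star_mul]; exact hw0s

/-- Cuntz comparison modulo an ideal -/
def Sub (K : Set B) (a b : B) : Prop := ∀ ε : ℝ, 0 < ε → ∃ x : B, q K (a - star x * b * x) < ε
/-- doubled Cuntz comparison modulo an ideal -/
def Sub2 (K : Set B) (a c : B) : Prop := ∀ ε : ℝ, 0 < ε → ∃ x y : B, q K (a - star x * c * x) < ε ∧
  q K (a - star y * c * y) < ε ∧ q K (star x * c * y) < ε

variable {K : Set B}

lemma q_conj (hK : IsIdeal K) (x m z : B) : q K (star x * m * z) ≤ ‖x‖ * q K m * ‖z‖ := by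
  refine (q_mul_right hK _ _).trans ?_
  have := q_mul_left hK (star x) m
  rw [norm_star] at this
  exact mul_le_mul_of_nonneg_right this (norm_nonneg z)

lemma Sub.mono (hK : IsIdeal K) {L : Set B} (h : K ⊆ L) {a b : B} (hab : Sub K a b) : Sub L a b :=
  fun ε hε => (hab ε hε).imp fun _ hx => (q_mono hK h _).trans_lt hx
lemma Sub2.mono (hK : IsIdeal K) {L : Set B} (h : K ⊆ L) {a b : B} (hab : Sub2 K a b) : Sub2 L a b := by
  intro ε hε
  obtain ⟨x, y, h1, h2, h3⟩ := hab ε hε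
  exact ⟨x, y, (q_mono hK h _).trans_lt h1, (q_mono hK h _).trans_lt h2, (q_mono hK h _).trans_lt h3⟩

/-- small auxiliary choice -/
lemma exists_small (M : ℝ) {ε : ℝ} (hε : 0 < ε) : ∃ δ : ℝ, 0 < δ ∧ M * δ < ε := by
  refine ⟨ε / (|M| + 1), by positivity, ?_⟩
  rw [mul_div_assoc', div_lt_iff₀ (by positivity)]
  nlinarith [le_abs_self M, abs_nonneg M]

lemma conj_approx (hK : IsIdeal K) (x z b y y' c : B) :
    q K (star x * b * z - star (y * x) * c * (y' * z)) ≤ ‖x‖ * q K (b - star y * c * y') * ‖z‖ := by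
  have : star x * b * z - star (y * x) * c * (y' * z) = star x * (b - star y * c * y') * z := by
    simp only [star_mul, mul_sub, sub_mul, mul_assoc]
  rw [this]; exact q_conj hK _ _ _

lemma Sub.trans (hK : IsIdeal K) {a b c : B} (h1 : Sub K a b) (h2 : Sub K b c) : Sub K a c := by
  intro ε hε
  obtain ⟨x, hx⟩ := h1 (ε / 2) (half_pos hε)
  obtain ⟨δ, hδ, hδ'⟩ := exists_small (‖x‖ * ‖x‖) (half_pos hε)
  obtain ⟨y, hy⟩ := h2 δ hδ
  refine ⟨y * x, ?_⟩
  have e1 := q_tri hK a (star x * b * x) (star (y * x) * c * (y * x))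
  have e2 := conj_approx hK x x b y y c
  have e3 : ‖x‖ * q K (b - star y * c * y) * ‖x‖ ≤ ‖x‖ * ‖x‖ * δ := by
    rw [mul_right_comm]; exact mul_le_mul_of_nonneg_left hy.le (by positivity)
  linarith

lemma Sub2.of_left (hK : IsIdeal K) {a b c : B} (h1 : Sub K a b) (h2 : Sub2 K b c) : Sub2 K a c := by
  intro ε hε
  obtain ⟨x, hx⟩ := h1 (ε / 2) (half_pos hε)
  obtain ⟨δ, hδ, hδ'⟩ := exists_small (‖x‖ * ‖x‖) (half_pos hε)
  obtain ⟨y, z, hy, hz, hyz⟩ := h2 δ hδ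
  have e3 : ∀ m, q K m < δ → ‖x‖ * q K m * ‖x‖ ≤ ‖x‖ * ‖x‖ * δ := fun m hm => by
    rw [mul_right_comm]; exact mul_le_mul_of_nonneg_left hm.le (by positivity)
  refine ⟨y * x, z * x, ?_, ?_, ?_⟩
  · have e1 := q_tri hK a (star x * b * x) (star (y * x) * c * (y * x))
    have e2 := conj_approx hK x x b y y c
    linarith [e3 _ hy]
  · have e1 := q_tri hK a (star x * b * x) (star (z * x) * c * (z * x))
    have e2 := conj_approx hK x x b z z c
    linarith [e3 _ hz]
  · have : star (y * x) * c * (z * x) = star x * (star y * c * z) * x := by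
      simp only [star_mul, mul_assoc]
    rw [this]
    linarith [q_conj hK x (star y * c * z) x, e3 _ hyz]

lemma Sub2.of_right (hK : IsIdeal K) {a b c : B} (h1 : Sub2 K a b) (h2 : Sub K b c) : Sub2 K a c := by
  intro ε hε
  obtain ⟨x, y, hx, hy, hxy⟩ := h1 (ε / 2) (half_pos hε)
  obtain ⟨δ, hδ, hδ'⟩ := exists_small (‖x‖ * ‖x‖ + ‖x‖ * ‖y‖ + ‖y‖ * ‖y‖) (half_pos hε)
  obtain ⟨z, hz⟩ := h2 δ hδ
  have e3 : ∀ x y : B, ‖x‖ * q K (b - star z * c * z) * ‖y‖ ≤ ‖x‖ * ‖y‖ * δ := fun x y => by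
    rw [mul_right_comm]; exact mul_le_mul_of_nonneg_left hz.le (by positivity)
  have p1 : 0 ≤ ‖x‖ * ‖x‖ * δ := by positivity
  have p2 : 0 ≤ ‖x‖ * ‖y‖ * δ := by positivity
  have p3 : 0 ≤ ‖y‖ * ‖y‖ * δ := by positivity
  refine ⟨z * x, z * y, ?_, ?_, ?_⟩
  · have e1 := q_tri hK a (star x * b * x) (star (z * x) * c * (z * x))
    linarith [conj_approx hK x x b z z c, e3 x x]
  · have e1 := q_tri hK a (star y * b * y) (star (z * y) * c * (z * y))
    linarith [conj_approx hK y y b z z c, e3 y y]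
  · have e1 := q_tri hK (star (z * x) * c * (z * y)) (star x * b * y) 0
    rw [sub_zero, sub_zero, q_sub_comm hK] at e1
    linarith [conj_approx hK x y b z z c, e3 x y]

lemma Sub.of_eq (hK : IsIdeal K) {a b x : B} (h : a = star x * b * x) : Sub K a b :=
  fun ε hε => ⟨x, by rw [h, sub_self, q_eq_zero hK hK.zero_mem]; exact hε⟩

lemma Sub.of_le (hK : IsIdeal K) {g T : B} (hg : 0 ≤ g) (h : g ≤ T) : Sub K g T := by
  intro ε hε
  obtain ⟨w, -, hw⟩ := ord_lemma hg (hg.trans h) (η := ε / 4) (m := 0) (by positivity) (by simpa using h)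
    (by simp; positivity)
  exact ⟨w, (q_le_norm hK _).trans_lt (by linarith)⟩

lemma Sub.refl (hK : IsIdeal K) {a : B} (ha : 0 ≤ a) : Sub K a a := Sub.of_le hK ha le_rfl

lemma Sub.zero (hK : IsIdeal K) (a : B) : Sub K 0 a := Sub.of_eq hK (x := 0) (by simp)

lemma Sub.smul (hK : IsIdeal K) {c : ℝ} (hc : 0 ≤ c) {a b : B} (h : Sub K a b) : Sub K (c • a) b := by
  intro ε hε
  obtain ⟨δ, hδ, hδ'⟩ := exists_small c hε
  obtain ⟨x, hx⟩ := h δ hδ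
  refine ⟨√c • x, ?_⟩
  have : c • a - star (√c • x) * b * (√c • x) = c • (a - star x * b * x) := by
    rw [star_smul, smul_mul_assoc, smul_mul_assoc, mul_smul_comm, smul_smul, smul_sub]
    simp [Real.mul_self_sqrt hc]
  rw [this]
  refine (q_rsmul_le hK hc _).trans_lt (lt_of_le_of_lt ?_ hδ')
  exact mul_le_mul_of_nonneg_left hx.le hc

/-- removing scalars on the right -/
lemma Sub.of_smul_right (hK : IsIdeal K) {c : ℝ} (hc : 0 ≤ c) {a b : B} (h : Sub K a (c • b)) :
    Sub K a b := by
  intro ε hε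
  obtain ⟨x, hx⟩ := h ε hε
  refine ⟨√c • x, ?_⟩
  have : star (√c • x) * b * (√c • x) = star x * (c • b) * x := by
    rw [star_smul, smul_mul_assoc, smul_mul_assoc, mul_smul_comm, smul_smul]
    simp [Real.mul_self_sqrt hc, mul_smul_comm, smul_mul_assoc]
  rwa [this]

lemma Sub2.add (hK : IsIdeal K) {a c T1 T2 : B} (h : Sub2 K a c) (hc : star c = c) (h1 : Sub K T1 a)
    (h2 : Sub K T2 a) : Sub K (T1 + T2) c := by
  intro ε hε
  obtain ⟨w, hw⟩ := h1 (ε / 4) (by positivity)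
  obtain ⟨v, hv⟩ := h2 (ε / 4) (by positivity)
  obtain ⟨δ, hδ, hδ'⟩ := exists_small (‖w‖ * ‖w‖ + ‖w‖ * ‖v‖ + ‖w‖ * ‖v‖ + ‖v‖ * ‖v‖) (half_pos hε)
  obtain ⟨x, y, hx, hy, hxy⟩ := h δ hδ
  refine ⟨x * w + y * v, ?_⟩
  have e : T1 + T2 - star (x * w + y * v) * c * (x * w + y * v) =
      (T1 - star w * a * w) + (T2 - star v * a * v) + star w * (a - star x * c * x) * w
      + star v * (a - star y * c * y) * v - star w * (star x * c * y) * v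
      - star (star w * (star x * c * y) * v) := by
    simp only [star_add, star_mul, star_star, hc, mul_sub, sub_mul, mul_add, add_mul, mul_assoc]; abel
  have f : ∀ (x m y : B), q K m < δ → q K (star x * m * y) ≤ ‖x‖ * ‖y‖ * δ := fun x m y hm => by
    refine (q_conj hK _ _ _).trans ?_
    rw [mul_right_comm]; exact mul_le_mul_of_nonneg_left hm.le (by positivity)
  rw [e]
  have g1 := q_sub hK ((T1 - star w * a * w) + (T2 - star v * a * v) + star w * (a - star x * c * x) * w
      + star v * (a - star y * c * y) * v - star w * (star x * c * y) * v) (star (star w * (star x * c * y) * v))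
  have g2 := q_sub hK ((T1 - star w * a * w) + (T2 - star v * a * v) + star w * (a - star x * c * x) * w
      + star v * (a - star y * c * y) * v) (star w * (star x * c * y) * v)
  have g3 := q_add hK ((T1 - star w * a * w) + (T2 - star v * a * v) + star w * (a - star x * c * x) * w)
     (star v * (a - star y * c * y) * v)
  have g4 := q_add hK ((T1 - star w * a * w) + (T2 - star v * a * v)) (star w * (a - star x * c * x) * w)
  have g5 := q_add hK (T1 - star w * a * w) (T2 - star v * a * v)
  rw [q_star hK] at g1
  linarith [f w _ w hx, f v _ v hy, f w _ v hxy]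

lemma Sub.closed (hK : IsIdeal K) {a b : B} (h : ∀ ε : ℝ, 0 < ε → ∃ a', q K (a - a') < ε ∧ Sub K a' b) :
    Sub K a b := by
  intro ε hε
  obtain ⟨a', h1, h2⟩ := h (ε / 2) (half_pos hε)
  obtain ⟨x, hx⟩ := h2 (ε / 2) (half_pos hε)
  exact ⟨x, by linarith [q_tri hK a a' (star x * b * x)]⟩

lemma Sub.mem {a b : B} {L : Set B} (hL : IsIdeal L) (hb : b ∈ L) (h : Sub {0} a b) : a ∈ L := by
  refine hL.mem_of_approx fun ε hε => ?_
  obtain ⟨x, hx⟩ := h ε hε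
  rw [q_zero_ideal] at hx
  exact ⟨_, hL.mul_right _ (hL.mul_left _ hb), hx⟩

lemma Sub.mem_mod (hK : IsIdeal K) {a b : B} (hb : b ∈ K) (h : Sub K a b) : a ∈ K := by
  refine mem_of_q_zero hK fun ε hε => ?_
  obtain ⟨x, hx⟩ := h ε hε
  rwa [q_congr hK (y := a)] at hx
  simpa using hK.neg_mem (hK.mul_right x (hK.mul_left (star x) hb))

lemma sub_zero_iff {a b : B} : Sub {0} a b ↔ CuntzBelow a b := by
  simp [Sub, CuntzBelow, q_zero_ideal]

/-- properly infinite elements absorb their ideal -/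
lemma pic (hK : IsIdeal K) {a g : B} (ha : 0 ≤ a) (h : Sub2 K a a) (hg : 0 ≤ g) (hga : g ∈ idealGen {a}) :
    Sub K g a := by
  have has : star a = a := (IsSelfAdjoint.of_nonneg ha).star_eq
  have hI : IsIdeal {z : B | Sub K (star z * z) a} := by
    refine mk_isIdeal ?_ ?_ ?_ ?_ ?_ ?_
    · rw [← closure_subset_iff_isClosed]
      intro z hz
      refine Sub.closed hK fun ε hε => ?_
      have hcont : Continuous fun w : B => star z * z - star w * w := by fun_prop
      have : ∀ᶠ w in nhds z, ‖star z * z - star w * w‖ < ε := by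
        have := (hcont.norm.tendsto z)
        simp only [sub_self, norm_zero] at this
        exact this.eventually (gt_mem_nhds hε)
      obtain ⟨w, hw1, hw2⟩ := mem_closure_iff_nhds.1 hz _ this
      exact ⟨_, (q_le_norm hK _).trans_lt hw1, hw2⟩
    · show Sub K _ _
      rw [star_zero, zero_mul]; exact Sub.zero hK a
    · intro z hz w hw
      have h1 := h.add hK has (h.add hK has hz hz) (h.add hK has hw hw)
      refine Sub.trans hK (Sub.of_le hK (star_mul_self_nonneg _) ?_) h1
      rw [← sub_nonneg]
      have : star z * z + star z * z + (star w * w + star w * w) - star (z + w) * (z + w) =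
        star (z - w) * (z - w) := by
        simp only [star_add, star_sub, mul_sub, sub_mul, mul_add, add_mul]; abel
      rw [this]; exact star_mul_self_nonneg _
    · intro c z hz
      have : star (c • z) * (c • z) = (‖c‖ ^ 2) • (star z * z) := by
        rw [star_smul, smul_mul_assoc, mul_smul_comm, smul_smul, ← Complex.coe_smul]
        congr 1
        rw [mul_comm]
        simpa using Complex.mul_conj' c
      show Sub K _ _
      rw [this]
      exact Sub.smul hK (by positivity) hz
    · intro z hz c
      have h1 := Sub.smul hK (norm_nonneg (star c * c)) hz
      refine Sub.trans hK (Sub.of_le hK (star_mul_self_nonneg _) ?_) h1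
      have := CStarAlgebra.star_left_conjugate_le_norm_smul (a := z) (b := star c * c)
        (IsSelfAdjoint.star_mul_self c)
      simpa [star_mul, mul_assoc] using this
    · intro z hz c
      exact Sub.trans hK (Sub.of_eq hK (x := c) (by simp [star_mul, mul_assoc])) hz
  have haI : a ∈ {z : B | Sub K (star z * z) a} := by
    obtain ⟨r, hr0, hrs, hr⟩ := exists_sqrt ha
    refine Sub.of_eq hK (x := r) ?_
    rw [has, hrs]
    nth_rewrite 1 2 3 [← hr]
    simp only [mul_assoc]
  obtain ⟨r, hr0, hrs, rfl⟩ := exists_sqrt hg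
  have h2 : r ∈ idealGen {a} := sqrt_mem (isIdeal_gen _) hrs hga
  have h3 := gen_subset hI haI h2
  simpa [hrs] using h3

lemma properlyInfinite_sub2 {a : B} (ha : 0 ≤ a) (h : ProperlyInfinite a) : Sub2 {0} a a := by
  intro ε hε
  obtain ⟨x, y, ⟨c, rfl⟩, ⟨d, rfl⟩, h1, h2, h3⟩ := h (ε / 2) (half_pos hε)
  obtain ⟨r, hr0, hrs, hr⟩ := exists_sqrt ha
  have has : star a = a := (IsSelfAdjoint.of_nonneg ha).star_eq
  have e : ∀ c d : B, star (r * c) * a * (r * d) = star (a * c) * (a * d) := by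
    intro c d
    rw [star_mul, star_mul, has, hrs]
    nth_rewrite 1 2 3 [← hr]
    simp only [mul_assoc]
  refine ⟨r * c, r * d, ?_, ?_, ?_⟩
  · rw [q_zero_ideal, e, norm_sub_rev]; linarith
  · rw [q_zero_ideal, e, norm_sub_rev]; linarith
  · rw [q_zero_ideal, e]; linarith

/-- the cut down -/
noncomputable def cut (κ : ℝ) (a : B) : B := fc (fun t => max (t - κ) 0) a
lemma cut_CZ {κ : ℝ} (hκ : 0 ≤ κ) : CZ (fun t => max (t - κ) 0) :=
  ⟨by fun_prop, by simp [hκ]⟩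
lemma cut_nonneg (κ : ℝ) (a : B) : 0 ≤ cut κ a := fc_nonneg_sa fun t => le_max_right _ _
lemma cut_norm {κ : ℝ} (hκ : 0 ≤ κ) {a : B} (ha : 0 ≤ a) : ‖a - cut κ a‖ ≤ κ := by
  have hid := fc_id (IsSelfAdjoint.of_nonneg ha)
  nth_rewrite 1 [← hid]
  unfold cut
  rw [fc_sub CZ.id (cut_CZ hκ)]
  refine fc_norm ha hκ fun t ht _ => ?_
  rw [abs_le]
  constructor
  · rcases max_cases (t - κ) 0 with h | h <;> linarith
  · rcases max_cases (t - κ) 0 with h | h <;> linarith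
lemma cut_le {κ : ℝ} (hκ : 0 ≤ κ) {a : B} (ha : 0 ≤ a) : cut κ a ≤ a := by
  have hid := fc_id (IsSelfAdjoint.of_nonneg ha)
  nth_rewrite 2 [← hid]
  refine fc_le (cut_CZ hκ) CZ.id ha fun t ht _ => ?_
  exact max_le (by linarith) ht
lemma cut_mem (hK : IsIdeal K) {a : B} (ha : a ∈ K) (κ : ℝ) : cut κ a ∈ K := fc_mem hK ha _
lemma exists_cut (hK : IsIdeal K) {a : B} (ha : 0 ≤ a) (h : a ∉ K) : ∃ κ : ℝ, 0 < κ ∧ cut κ a ∉ K := by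
  by_contra hcon
  push Not at hcon
  refine h (hK.mem_of_approx fun ε hε => ⟨cut (ε / 2) a, hcon _ (half_pos hε), ?_⟩)
  linarith [cut_norm (half_pos hε).le ha]

end sub
end KM

set_option linter.unusedSectionVars false
set_option linter.unusedVariables false
namespace KM
section char
variable {B : Type*} [NonUnitalCStarAlgebra B] [PartialOrder B] [StarOrderedRing B]

lemma mem_of_le_add {M : Set B} (hM : IsIdeal M) {g : B} (hg : 0 ≤ g)
    (h : ∀ ε : ℝ, 0 < ε → ∃ m ∈ M, ∃ d : B, g ≤ m + d ∧ ‖d‖ ≤ ε) : g ∈ M := by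
  obtain ⟨r, hr0, hrs, rfl⟩ := exists_sqrt hg
  refine hM.mul_left _ (mem_of_q_zero hM fun ε hε => ?_)
  obtain ⟨m, hm, d, h1, h2⟩ := h ((ε / 2) ^ 2 / 2) (by positivity)
  obtain ⟨u, huM, hu0, hus, hu1, hu⟩ := exists_au hM {m} (by simpa using hm)
    (ε := (ε / 2) ^ 2 / 2) (by positivity)
  have hu := (hu m (by simp)).2
  have e1 : ‖r - r * u‖ ^ 2 ≤ (ε / 2) ^ 2 := by
    rw [← norm_star_mul, cj_star_mul hus, hrs]
    refine (CStarAlgebra.norm_le_norm_of_nonneg_of_le (cj_nonneg hus hg) (cj_le hus h1)).trans ?_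
    rw [cj_add]
    have h3 : ‖cj u m‖ ≤ (ε / 2) ^ 2 / 2 := by
      rw [cj_eq]; exact (norm_sub_mul_le' hu0 hu1 _).trans hu
    linarith [norm_add_le (cj u m) (cj u d), norm_cj_le hu0 hu1 d]
  have e2 := (abs_le.1 (abs_le_of_sq_le_sq e1 (by positivity))).2
  have e3 : q M r ≤ ‖r - r * u‖ := q_le_of_mem (hM.mul_left _ huM)
  linarith

/-- positive part -/
noncomputable def pp (x : B) : B := fc (fun t => max t 0) x
lemma pp_CZ : CZ (fun t => max t 0) := ⟨by fun_prop, by simp⟩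
lemma pn_CZ : CZ (fun t => max (-t) 0) := ⟨by fun_prop, by simp⟩
lemma pp_neg {x : B} (hx : IsSelfAdjoint x) : pp (-x) = fc (fun t => max (-t) 0) x :=
  (cfcₙ_comp_neg (fun t => max t 0) x (by fun_prop) (by simp) hx).symm
lemma pp_nonneg (x : B) : 0 ≤ pp x := fc_nonneg_sa fun t => le_max_right _ _
lemma pp_sub {x : B} (hx : IsSelfAdjoint x) : pp x - pp (-x) = x := by
  rw [pp_neg hx]
  unfold pp
  rw [fc_sub pp_CZ pn_CZ]
  conv_rhs => rw [← fc_id hx]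
  congr 1
  ext t
  rcases le_total t 0 with h | h
  · rw [max_eq_right h, max_eq_left (by linarith)]; ring
  · rw [max_eq_left h, max_eq_right (by linarith)]; ring
lemma pp_mul {x : B} (hx : IsSelfAdjoint x) : pp x * pp (-x) = 0 := by
  rw [pp_neg hx]
  unfold pp
  rw [fc_mul pp_CZ pn_CZ]
  have : (fun t : ℝ => max t 0 * max (-t) 0) = fun _ => 0 := by
    ext t
    rcases le_total t 0 with h | h
    · rw [max_eq_right h]; ring
    · rw [max_eq_right (a := -t) (by linarith)]; ring
  rw [this]; exact cfcₙ_const_zero ℝ x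
lemma pp_cube {x : B} (hx : IsSelfAdjoint x) : pp x * x * pp x = pp x * pp x * pp x := by
  have h := pp_mul hx
  nth_rewrite 2 [← pp_sub hx]
  rw [mul_sub, h, sub_zero]
lemma le_pp {x : B} (hx : IsSelfAdjoint x) : x ≤ pp x := by
  rw [← sub_nonneg]
  nth_rewrite 2 [← pp_sub hx]
  simpa using pp_nonneg (-x)

lemma pp_mem {M : Set B} (hM : IsIdeal M) {x : B} (hx : IsSelfAdjoint x)
    (h : ∀ ε : ℝ, 0 < ε → ∃ m ∈ M, ∃ d : B, x ≤ m + d ∧ ‖d‖ ≤ ε) : pp x ∈ M := by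
  have hps : star (pp x) = pp x := fc_star _ _
  have h1 : pp x * x * pp x ∈ M := by
    refine mem_of_le_add hM ?_ fun ε hε => ?_
    · rw [pp_cube hx]
      have := star_left_conjugate_nonneg (pp_nonneg x) (pp x)
      rwa [hps] at this
    · obtain ⟨δ, hδ, hδ'⟩ := exists_small (‖pp x‖ * ‖pp x‖) hε
      obtain ⟨m, hm, d, h1, h2⟩ := h δ hδ
      refine ⟨pp x * m * pp x, hM.mul_right _ (hM.mul_left _ hm), pp x * d * pp x, ?_, ?_⟩
      · have := star_left_conjugate_le_conjugate h1 (pp x)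
        rw [hps] at this
        simpa [mul_add, add_mul] using this
      · refine (norm_mul_le _ _).trans ?_
        have h3 := norm_mul_le (pp x) d
        have : ‖pp x * d‖ * ‖pp x‖ ≤ ‖pp x‖ * δ * ‖pp x‖ := by
          apply mul_le_mul_of_nonneg_right _ (norm_nonneg _)
          exact h3.trans (mul_le_mul_of_nonneg_left h2 (norm_nonneg _))
        nlinarith
  rw [pp_cube hx] at h1
  refine sqrt_mem hM hps (sqrt_mem hM (by simp [hps]) ?_)
  have := hM.mul_right (pp x) h1
  simpa [mul_assoc] using this

lemma char_lemma (hB : ¬ ∃ φ : B →ₗ[ℂ] ℂ, IsCharacter φ) {K M : Set B} (hK : IsIdeal K) (hM : IsIdeal M)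
    (hKM : ¬ K ⊆ M) : ∃ b c : B, b ∈ K ∧ c ∈ K ∧ 0 ≤ b ∧ 0 ≤ c ∧ b * c = 0 ∧ b ∉ M ∧ c ∉ M := by
  by_contra hcon
  have hcon' : ∀ b c : B, b ∈ K → c ∈ K → 0 ≤ b → 0 ≤ c → b * c = 0 → b ∈ M ∨ c ∈ M := by
    intro b c h1 h2 h3 h4 h5
    by_contra h6
    rw [not_or] at h6
    exact hcon ⟨b, c, h1, h2, h3, h4, h5, h6.1, h6.2⟩
  apply hB
  obtain ⟨k, hkK, hkM⟩ := Set.not_subset.1 hKM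
  obtain ⟨g, hgK, hgM, hg0⟩ : ∃ g ∈ K, g ∉ M ∧ 0 ≤ g :=
    ⟨star k * k, hK.mul_left _ hkK, fun h => hkM (mem_of_star_mul_mem hM h), star_mul_self_nonneg k⟩
  have hgs : IsSelfAdjoint g := .of_nonneg hg0
  -- real step
  have big : ∀ h : B, ¬ ∀ t : ℝ, 0 < t → ∃ m ∈ M, t • g ≤ m + h := by
    intro h hall
    refine hgM (mem_of_le_add hM hg0 fun ε hε => ?_)
    obtain ⟨t, ht, ht'⟩ : ∃ t : ℝ, 0 < t ∧ ‖h‖ ≤ ε * t :=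
      ⟨(‖h‖ + 1) / ε, by positivity, by rw [mul_div_cancel₀ _ hε.ne']; linarith⟩
    obtain ⟨m, hm, hle⟩ := hall t ht
    refine ⟨t⁻¹ • m, hM.rsmul_mem _ hm, t⁻¹ • h, ?_, ?_⟩
    · have := smul_le_smul_of_nonneg_left hle (inv_nonneg.2 ht.le)
      rwa [smul_smul, inv_mul_cancel₀ ht.ne', one_smul, smul_add] at this
    · rw [norm_smul, Real.norm_eq_abs, abs_of_nonneg (inv_nonneg.2 ht.le), inv_mul_le_iff₀ ht]
      linarith
  have real : ∀ h ∈ K, IsSelfAdjoint h → ∃ t : ℝ, h - t • g ∈ M := by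
    intro h hhK hh
    have hsa : ∀ t : ℝ, IsSelfAdjoint (h - t • g) := fun t => hh.sub ((IsSelfAdjoint.all t).smul hgs)
    have hinK : ∀ t : ℝ, h - t • g ∈ K := fun t => hK.sub_mem hhK (hK.rsmul_mem t hgK)
    let S : Set ℝ := {t | ∃ m ∈ M, h - t • g ≤ m}
    have hdich : ∀ t, t ∉ S → ∃ m ∈ M, -(h - t • g) ≤ m := by
      intro t ht
      rcases hcon' (pp (h - t • g)) (pp (-(h - t • g))) (fc_mem hK (hinK t) _)
        (fc_mem hK (hK.neg_mem (hinK t)) _) (pp_nonneg _) (pp_nonneg _) (pp_mul (hsa t)) with h1 | h1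
      · exact absurd ⟨_, h1, le_pp (hsa t)⟩ ht
      · exact ⟨_, h1, le_pp (hsa t).neg⟩
    have hup : ∀ s t, s ∈ S → s ≤ t → t ∈ S := by
      rintro s t ⟨m, hm, hs⟩ hst
      refine ⟨m, hm, le_trans ?_ hs⟩
      exact sub_le_sub_left (smul_le_smul_of_nonneg_right hst hg0) h
    have hne : S.Nonempty := by
      by_contra hemp
      rw [Set.not_nonempty_iff_eq_empty] at hemp
      refine big h fun t ht => ?_
      obtain ⟨m, hm, hle⟩ := hdich t (by rw [hemp]; simp)
      refine ⟨m, hm, ?_⟩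
      rwa [neg_sub, sub_le_iff_le_add] at hle
    have hbdd : BddBelow S := by
      by_contra hnb
      have hall : ∀ t, t ∈ S := by
        intro t
        obtain ⟨s, hs, hst⟩ := not_bddBelow_iff.1 hnb t
        exact hup s t hs hst.le
      refine big (-h) fun t ht => ?_
      obtain ⟨m, hm, hle⟩ := hall (-t)
      refine ⟨m, hm, ?_⟩
      rw [neg_smul, sub_neg_eq_add] at hle
      rw [← sub_eq_add_neg, le_sub_iff_add_le, add_comm]; exact hle
    set t0 := sInf S with ht0
    refine ⟨t0, ?_⟩
    have hx := hsa t0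
    have e1 : pp (h - t0 • g) ∈ M := by
      refine pp_mem hM hx fun ε hε => ?_
      obtain ⟨δ, hδ, hδ'⟩ := exists_small ‖g‖ hε
      obtain ⟨s, hs, hst⟩ := exists_lt_of_csInf_lt hne (show sInf S < t0 + δ by linarith)
      obtain ⟨m, hm, hle⟩ := hup s _ hs hst.le
      refine ⟨m, hm, δ • g, ?_, ?_⟩
      · rw [add_smul, ← sub_sub, sub_le_iff_le_add] at hle; exact hle
      · rw [norm_smul, Real.norm_eq_abs, abs_of_pos hδ]; linarith
    have e2 : pp (-(h - t0 • g)) ∈ M := by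
      refine pp_mem hM hx.neg fun ε hε => ?_
      obtain ⟨δ, hδ, hδ'⟩ := exists_small ‖g‖ hε
      obtain ⟨m, hm, hle⟩ := hdich (t0 - δ) fun hmem => by
        have := csInf_le hbdd hmem
        linarith
      refine ⟨m, hm, δ • g, ?_, ?_⟩
      · have : -(h - t0 • g) = -(h - (t0 - δ) • g) + δ • g := by rw [sub_smul]; abel
        rw [this]
        exact add_le_add_left hle _
      · rw [norm_smul, Real.norm_eq_abs, abs_of_pos hδ]; linarith
    rw [← pp_sub hx]
    exact hM.sub_mem e1 e2
  have cplx : ∀ h ∈ K, ∃ c : ℂ, h - c • g ∈ M := by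
    intro h hh
    have hre : ((realPart h : selfAdjoint B) : B) ∈ K := by
      rw [realPart_apply_coe]
      exact hK.rsmul_mem _ (hK.add_mem hh (hK.star_mem hh))
    have him : ((imaginaryPart h : selfAdjoint B) : B) ∈ K := by
      rw [imaginaryPart_apply_coe]
      exact hK.smul_mem _ (hK.rsmul_mem _ (hK.sub_mem hh (hK.star_mem hh)))
    obtain ⟨s, hs⟩ := real _ hre (realPart h).2
    obtain ⟨t, ht⟩ := real _ him (imaginaryPart h).2
    refine ⟨s + Complex.I * t, ?_⟩
    have : h - (s + Complex.I * t : ℂ) • g =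
        ((realPart h : B) - s • g) + Complex.I • ((imaginaryPart h : B) - t • g) := by
      nth_rewrite 1 [← realPart_add_I_smul_imaginaryPart h]
      rw [smul_sub, add_smul, mul_smul, Complex.coe_smul, Complex.coe_smul]
      abel
    rw [this]
    exact hM.add_mem hs (hM.smul_mem _ ht)
  have uniq : ∀ c d : ℂ, c • g - d • g ∈ M → c = d := by
    intro c d h
    by_contra hcd
    rw [← sub_smul] at h
    have := hM.smul_mem (c - d)⁻¹ h
    rw [smul_smul, inv_mul_cancel₀ (sub_ne_zero.2 hcd), one_smul] at this
    exact hgM this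
  choose φ hφ using fun b : B => cplx (b * g) (hK.mul_left b hgK)
  have uniq2 : ∀ (b : B) (c : ℂ), b * g - c • g ∈ M → φ b = c := by
    intro b c h
    apply uniq
    have := hM.sub_mem h (hφ b)
    simpa using this
  refine ⟨{ toFun := φ, map_add' := ?_, map_smul' := ?_ }, ?_, ?_⟩
  · intro x y
    apply uniq2
    have := hM.add_mem (hφ x) (hφ y)
    convert this using 1
    rw [add_mul, add_smul]; abel
  · intro c x
    apply uniq2
    have := hM.smul_mem c (hφ x)
    convert this using 1
    simp [smul_sub, smul_smul, smul_mul_assoc]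
  · intro x y
    apply uniq2
    have := hM.add_mem (hM.mul_left x (hφ y)) (hM.smul_mem (φ y) (hφ x))
    convert this using 1
    simp [mul_sub, smul_sub, smul_smul, mul_smul_comm, mul_assoc, mul_comm]
  · intro h0
    have h1 : φ g = 0 := by
      have := LinearMap.congr_fun h0 g
      simpa using this
    have h2 := hφ g
    rw [h1, zero_smul, sub_zero] at h2
    exact hgM (sqrt_mem hM hgs.star_eq h2)

lemma char_norm (φ : B →ₗ[ℂ] ℂ) (hφ : ∀ x y : B, φ (x * y) = φ x * φ y) (x : B) : ‖φ x‖ ≤ ‖x‖ := by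
  let ψ : B →ₙₐ[ℂ] ℂ :=
    { toFun := φ, map_smul' := fun c x => by simp, map_zero' := by simp,
      map_add' := fun x y => by simp, map_mul' := hφ }
  have h := AlgHom.norm_apply_le_self (Unitization.lift ψ) (x : Unitization ℂ B)
  have h2 : ‖(x : Unitization ℂ B)‖ = ‖x‖ := Unitization.norm_inr _
  simpa [h2, ψ] using h

lemma spi_no_char (h : StronglyPurelyInfinite B) : ¬ ∃ φ : B →ₗ[ℂ] ℂ, IsCharacter φ := by
  rintro ⟨φ, hmul, hne⟩
  obtain ⟨b, hb⟩ : ∃ b, φ b ≠ 0 := by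
    by_contra hcon
    push Not at hcon
    exact hne (LinearMap.ext hcon)
  obtain ⟨s, hs, hφs⟩ : ∃ s : B, IsSelfAdjoint s ∧ φ s ≠ 0 := by
    by_contra hcon
    push Not at hcon
    apply hb
    rw [← realPart_add_I_smul_imaginaryPart b, map_add, map_smul, hcon _ (realPart b).2,
      hcon _ (imaginaryPart b).2]
    simp
  have ha0 : 0 ≤ s * s := by
    have := star_mul_self_nonneg s
    rwa [hs.star_eq] at this
  set A := φ (s * s) with hA
  have hA0 : 0 < ‖A‖ := by rw [hA, hmul]; simpa using hφs
  obtain ⟨x, y, -, -, h1, h2, h3⟩ := h _ _ ha0 ha0 (‖A‖ / 4) (by positivity)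
  have n := char_norm φ hmul
  have e1 := (n _).trans h1
  have e2 := (n _).trans h2
  have e3 := (n _).trans h3
  have e4 : ‖φ (star y * x)‖ ≤ ‖A‖ / 4 := by
    refine (n _).trans ?_
    rw [← norm_star]; simpa using h3
  rw [map_sub, hmul, ← hA] at e1 e2
  rw [hmul] at e3 e4
  have f1 : ‖A‖ - ‖A‖ / 4 ≤ ‖φ (star x) * φ x‖ := by
    have := norm_sub_norm_le A (A - φ (star x) * φ x)
    rw [sub_sub_cancel, norm_sub_rev] at this
    linarith
  have f2 : ‖A‖ - ‖A‖ / 4 ≤ ‖φ (star y) * φ y‖ := by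
    have := norm_sub_norm_le A (A - φ (star y) * φ y)
    rw [sub_sub_cancel, norm_sub_rev] at this
    linarith
  have f3 : ‖φ (star x) * φ x‖ * ‖φ (star y) * φ y‖ = ‖φ (star x) * φ y‖ * ‖φ (star y) * φ x‖ := by
    simp only [norm_mul]; ring
  have f4 : ‖φ (star x) * φ y‖ * ‖φ (star y) * φ x‖ ≤ (‖A‖ / 4) * (‖A‖ / 4) :=
    mul_le_mul e3 e4 (norm_nonneg _) (by positivity)
  have f5 : (‖A‖ - ‖A‖ / 4) * (‖A‖ - ‖A‖ / 4) ≤ ‖φ (star x) * φ x‖ * ‖φ (star y) * φ y‖ :=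
    mul_le_mul f1 f2 (by linarith) (norm_nonneg _)
  nlinarith

end char
end KM

set_option linter.unusedSectionVars false
set_option linter.unusedVariables false
namespace KM
section P5
variable {B : Type*} [NonUnitalCStarAlgebra B] [PartialOrder B] [StarOrderedRing B]
variable {K : Set B}

lemma q_mul (hK : IsIdeal K) (a b : B) : q K (a * b) ≤ q K a * q K b := by
  refine le_of_forall_pos_le_add fun ε hε => ?_
  obtain ⟨δ, hδ, hδ'⟩ := exists_small (q K a) hε
  obtain ⟨k, hk, h⟩ := (q_lt_iff hK (x := b) (r := q K b + δ)).1 (by linarith)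
  have h1 : q K (a * b) = q K (a * (b - k)) := by
    refine q_congr hK ?_
    rw [mul_sub, sub_sub_cancel]; exact hK.mul_left a hk
  have h2 := q_mul_right hK (b - k) a
  have h3 := mul_le_mul_of_nonneg_left h.le (q_nonneg (K := K) a)
  linarith

lemma sub_of_le_mod (hK : IsIdeal K) {g T k : B} (hg : 0 ≤ g) (hT : 0 ≤ T) (hk : k ∈ K)
    (h : g ≤ T + k) : Sub K g T := by
  intro ε hε
  obtain ⟨u, huK, hu0, hus, hu1, hu⟩ := exists_au hK {k} (by simpa using hk) (ε := ε / 8) (by positivity)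
  have hu' := (hu k (by simp)).2
  have h1 : cj u g ≤ cj u T + cj u k := by rw [← cj_add]; exact cj_le hus h
  have h2 : ‖cj u k‖ ≤ ε / 8 := by
    rw [cj_eq]; exact (norm_sub_mul_le' hu0 hu1 _).trans hu'
  obtain ⟨w, -, hw⟩ := ord_lemma (cj_nonneg hus hg) (cj_nonneg hus hT) (by positivity) h1 h2
  refine ⟨w, ?_⟩
  have hc : ∀ d : B, d - cj u d ∈ K := by
    intro d
    have : d - cj u d = u * d + d * u - u * d * u := by simp only [cj]; abel
    rw [this]
    exact hK.sub_mem (hK.add_mem (hK.mul_right _ huK) (hK.mul_left _ huK)) (hK.mul_left _ huK)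
  rw [q_congr hK (y := cj u g - star w * cj u T * w)]
  · exact (q_le_norm hK _).trans_lt (by linarith)
  · have : g - star w * T * w - (cj u g - star w * cj u T * w)
        = (g - cj u g) - star w * (T - cj u T) * w := by
      simp only [mul_sub, sub_mul]; abel
    rw [this]
    exact hK.sub_mem (hc g) (hK.mul_right _ (hK.mul_left _ (hc T)))

noncomputable def al (t : ℝ) : ℝ := max (min (3 - 5 * t) 1) 0
noncomputable def th (t : ℝ) : ℝ := al t / (1 - min t (3/5)) - (1 - al t) / max t (2/5)
noncomputable def om (t : ℝ) : ℝ := 1 / (max t (2/5)) * (1 / (1 - min t (3/5)))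

lemma al_cont : Continuous al := by unfold al; fun_prop
lemma al_mem (t : ℝ) : 0 ≤ al t ∧ al t ≤ 1 := by
  unfold al; exact ⟨le_max_right _ _, max_le (min_le_right _ _) zero_le_one⟩
lemma al_zero {t : ℝ} (h : 3/5 ≤ t) : al t = 0 := by
  unfold al; exact max_eq_right ((min_le_left _ _).trans (by linarith))
lemma al_one {t : ℝ} (h : t ≤ 2/5) : al t = 1 := by
  unfold al; rw [min_eq_right (by linarith), max_eq_left zero_le_one]
lemma d1 (t : ℝ) : 2/5 ≤ 1 - min t (3/5) := by have := min_le_right t (3/5); linarith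
lemma d2 (t : ℝ) : 2/5 ≤ max t (2/5) := le_max_right _ _
lemma th_cont : Continuous th := by
  unfold th
  refine Continuous.sub (al_cont.div (by fun_prop) fun t => by linarith [d1 t])
    ((continuous_const.sub al_cont).div (by fun_prop) fun t => by linarith [d2 t])
lemma om_cont : Continuous om := by
  unfold om
  refine Continuous.mul (continuous_const.div (by fun_prop) fun t => by linarith [d2 t])
    (continuous_const.div (by fun_prop) fun t => by linarith [d1 t])
lemma th_zero : th 0 = 1 := by
  unfold th; rw [al_one (by norm_num)]; norm_num
lemma om_zero : om 0 = 5/2 := by unfold om; norm_num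
lemma th_id (t : ℝ) : th t * (t * t - t) = 1 - al t - t := by
  unfold th
  rcases le_total t (2/5) with h | h
  · rw [al_one h, min_eq_left (by linarith)]
    have : 1 - t ≠ 0 := by linarith
    field_simp; ring
  · rcases le_total t (3/5) with h' | h'
    · rw [min_eq_left h', max_eq_left h]
      have : 1 - t ≠ 0 := by linarith
      have : t ≠ 0 := by linarith
      field_simp; ring
    · rw [al_zero h', max_eq_left h]
      have : t ≠ 0 := by linarith
      simp only [zero_div, zero_sub, sub_zero]
      field_simp; ring
lemma om_id (t : ℝ) : al t * (1 - al t) * (om t * (t * t - t)) = - (al t * (1 - al t)) := by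
  unfold om
  rcases le_total t (2/5) with h | h
  · rw [al_one h]; simp
  · rcases le_total t (3/5) with h' | h'
    · rw [min_eq_left h', max_eq_left h]
      have : 1 - t ≠ 0 := by linarith
      have : t ≠ 0 := by linarith
      field_simp; ring
    · rw [al_zero h']; simp
lemma th_bd (t : ℝ) : |th t - 1| ≤ 4 := by
  unfold th
  have h1 := d1 t
  have h2 := d2 t
  obtain ⟨h3, h4⟩ := al_mem t
  have a1 : al t / (1 - min t (3/5)) ≤ 5/2 := by rw [div_le_iff₀ (by linarith)]; linarith
  have a2 : (1 - al t) / max t (2/5) ≤ 5/2 := by rw [div_le_iff₀ (by linarith)]; linarith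
  have a3 : 0 ≤ al t / (1 - min t (3/5)) := div_nonneg h3 (by linarith)
  have a4 : 0 ≤ (1 - al t) / max t (2/5) := div_nonneg (by linarith) (by linarith)
  rw [abs_le]; constructor <;> linarith
lemma om_bd (t : ℝ) : |om t - 5/2| ≤ 10 := by
  unfold om
  have h1 := d1 t
  have h2 := d2 t
  have a1 : 1 / (1 - min t (3/5)) ≤ 5/2 := by rw [div_le_iff₀ (by linarith)]; linarith
  have a2 : 1 / max t (2/5) ≤ 5/2 := by rw [div_le_iff₀ (by linarith)]; linarith
  have a3 : 0 ≤ 1 / (1 - min t (3/5)) := div_nonneg zero_le_one (by linarith)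
  have a4 : 0 ≤ 1 / max t (2/5) := div_nonneg zero_le_one (by linarith)
  rw [abs_le]; constructor <;> nlinarith

/-- spectral rounding modulo an ideal -/
lemma round_proj (hK : IsIdeal K) {p0 : B} (h0 : IsSelfAdjoint p0) (hq : q K (p0 * p0 - p0) ≤ 1/50) :
    ∃ p : B, 0 ≤ p ∧ star p = p ∧ p * p - p ∈ K ∧ q K (p - p0) ≤ 5 * q K (p0 * p0 - p0) ∧
      (∀ L : Set B, IsIdeal L → p0 ∈ L → p ∈ L) := by
  have hid := fc_id h0
  have hχ : CZ (fun t => 1 - al t) := ⟨continuous_const.sub al_cont, by beta_reduce; rw [al_one (by norm_num)]; simp⟩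
  have hθ : CZ (fun t => th t - 1) := ⟨th_cont.sub continuous_const, by beta_reduce; rw [th_zero]; simp⟩
  have hω : CZ (fun t => om t - 5/2) := ⟨om_cont.sub continuous_const, by beta_reduce; rw [om_zero]; simp⟩
  have hd : CZ (fun t => t * t - t) := (CZ.id.mul CZ.id).sub CZ.id
  have hdeq : p0 * p0 - p0 = fc (fun t => t * t - t) p0 := by
    rw [← fc_sub (CZ.id.mul CZ.id) CZ.id, ← fc_mul CZ.id CZ.id, hid]
  set d := p0 * p0 - p0 with hd0
  set p := fc (fun t => 1 - al t) p0 with hp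
  refine ⟨p, fc_nonneg_sa fun t => by linarith [(al_mem t).2], fc_star _ _, ?_, ?_, fun L hL h => fc_mem hL h _⟩
  · have hφ : p * p - p = fc (fun t => (1 - al t) * (1 - al t) - (1 - al t)) p0 := by
      rw [hp, fc_mul hχ hχ, fc_sub (hχ.mul hχ) hχ]
    have hφC := (hχ.mul hχ).sub hχ
    set z := (5/2 : ℝ) • d + fc (fun t => om t - 5/2) p0 * d with hz
    have hzeq : z = fc (fun t => 5/2 * (t * t - t) + (om t - 5/2) * (t * t - t)) p0 := by
      rw [hz, hdeq, fc_smul _ hd, fc_mul hω hd, fc_add (hd.smul _) (hω.mul hd)]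
    have hzC := (hd.smul (5/2)).add (hω.mul hd)
    have hzz : p * p - p = -((p * p - p) * z) := by
      have : (p * p - p) * z = fc (fun t => (-1) * ((1 - al t) * (1 - al t) - (1 - al t))) p0 := by
        rw [hφ, hzeq, fc_mul hφC hzC]
        congr 1; funext t
        have := om_id t
        linear_combination -this
      rw [this, ← fc_smul _ hφC, ← hφ]; simp
    have hqz : q K z ≤ 1/2 := by
      have h1 := q_add hK ((5/2 : ℝ) • d) (fc (fun t => om t - 5/2) p0 * d)
      have h2 := q_rsmul_le hK (c := 5/2) (by norm_num) d
      have h3 := q_mul_left hK (fc (fun t => om t - 5/2) p0) d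
      have h4 := fc_norm_sa (a := p0) (c := 10) (by norm_num) om_bd
      have h5 := mul_le_mul_of_nonneg_right h4 (q_nonneg (K := K) d)
      linarith
    refine mem_of_q_zero hK fun ε hε => ?_
    have h1 := q_mul hK (p * p - p) z
    have h2 : q K (p * p - p) = q K ((p * p - p) * z) := by
      conv_lhs => rw [hzz]
      exact q_neg hK _
    have h3 := q_nonneg (K := K) (p * p - p)
    nlinarith
  · have : p - p0 = d + fc (fun t => th t - 1) p0 * d := by
      have e1 : p - p0 = fc (fun t => (1 - al t) - t) p0 := by
        rw [← fc_sub hχ CZ.id, hid]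
      rw [e1, hdeq, fc_mul hθ hd, fc_add hd (hθ.mul hd)]
      congr 1; funext t
      linear_combination - th_id t
    rw [this]
    have h1 := q_add hK d (fc (fun t => th t - 1) p0 * d)
    have h3 := q_mul_left hK (fc (fun t => th t - 1) p0) d
    have h4 := fc_norm_sa (a := p0) (c := 4) (by norm_num) th_bd
    have h5 := mul_le_mul_of_nonneg_right h4 (q_nonneg (K := K) d)
    linarith

lemma proj_core (hK : IsIdeal K) {w f x y : B} (hws : star w = w) (hf : f = w + w - w * w) (hwn : ‖w‖ ≤ 1)
    (hfn : ‖f‖ ≤ 1) (hwx : w * x = x) (hwy : w * y = y) (h1 : q K (star x * x - f) ≤ 1/10000)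
    (h2 : q K (star y * y - f) ≤ 1/10000) (h3 : q K (star x * y) ≤ 1/10000) :
    ∃ p : B, 0 ≤ p ∧ star p = p ∧ p * p - p ∈ K ∧ q K (f - star y * p * y) < 1/4 ∧
      (∀ L : Set B, IsIdeal L → w ∈ L → x ∈ L → p ∈ L) := by
  have hxw : star x * w = star x := by rw [← hws, ← star_mul, hwx]
  have hyw : star y * w = star y := by rw [← hws, ← star_mul, hwy]
  have hfs : star f = f := by simp [hf, star_mul, hws]
  have bx : ∀ x : B, q K (star x * x - f) ≤ 1/10000 → q K x ≤ 2 := by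
    intro x h1
    have e1 := q_sq_le hK x
    have e2 := q_add hK (star x * x - f) f
    rw [sub_add_cancel] at e2
    have e3 := q_le_norm hK f
    have e4 := q_nonneg (K := K) x
    nlinarith
  have hx2 := bx x h1
  have hy2 := bx y h2
  set S := star x with hS
  set m := S * x - f with hm
  set p0 := f - x * S - x - S + x * w + w * S with hp0
  have hp0s : IsSelfAdjoint p0 := by
    show star p0 = p0
    simp only [hp0, star_add, star_sub, star_mul, hfs, hws, hS, star_star]; abel
  set t1 := m * S + m - m * w with ht1
  have hid : p0 * p0 - p0 = x * t1 + t1 - w * t1 := by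
    have r1 : ∀ z, w * (x * z) = x * z := fun z => by rw [← mul_assoc, hwx]
    have r2 : ∀ z, S * (w * z) = S * z := fun z => by rw [← mul_assoc, hxw]
    simp only [ht1, hm, hp0, hf, mul_add, add_mul, mul_sub, sub_mul, mul_assoc, hwx, hxw, r1, r2]
    abel
  have qt1 : q K t1 ≤ 4 * q K m := by
    have a1 := q_sub hK (m * S + m) (m * w)
    have a2 := q_add hK (m * S) m
    have a3 := q_mul hK m S
    have a4 := q_mul_right hK w m
    have a5 : q K S ≤ 2 := by rw [hS, q_star hK]; exact hx2
    have a6 := q_nonneg (K := K) m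
    nlinarith
  have qd : q K (p0 * p0 - p0) ≤ 16 * q K m := by
    rw [hid]
    have a1 := q_sub hK (x * t1 + t1) (w * t1)
    have a2 := q_add hK (x * t1) t1
    have a3 := q_mul hK x t1
    have a4 := q_mul_left hK w t1
    have a6 := q_nonneg (K := K) t1
    nlinarith
  obtain ⟨p, hp, hps, hpp, hpq, hpL⟩ := round_proj hK hp0s (by linarith)
  refine ⟨p, hp, hps, hpp, ?_, fun L hL hwL hxL => hpL L hL ?_⟩
  · have e1 : star y * p0 * y = star y * y - star (S * y) * (S * y) := by
      have r1 : ∀ z, star y * (w * z) = star y * z := fun z => by rw [← mul_assoc, hyw]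
      simp only [hp0, hf, hS, mul_add, add_mul, mul_sub, sub_mul, mul_assoc, hwy, r1, star_mul, star_star]
      abel
    have e2 : f - star y * p * y = star (S * y) * (S * y) - (star y * y - f) - star y * (p - p0) * y := by
      have : star y * (p - p0) * y = star y * p * y - star y * p0 * y := by simp only [mul_sub, sub_mul]
      rw [this, e1]; abel
    rw [e2]
    have a1 := q_sub hK (star (S * y) * (S * y) - (star y * y - f)) (star y * (p - p0) * y)
    have a2 := q_sub hK (star (S * y) * (S * y)) (star y * y - f)
    have a3 := q_mul hK (star (S * y)) (S * y)
    rw [q_star hK] at a3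
    have a4 := q_mul hK (star y * (p - p0)) y
    have a5 := q_mul hK (star y) (p - p0)
    rw [q_star hK] at a5
    have a6 : q K (p - p0) ≤ 80/10000 := by linarith
    have a7 := q_nonneg (K := K) (p - p0)
    have a8 := q_nonneg (K := K) y
    have a9 := q_nonneg (K := K) (S * y)
    have a10 : q K (star y * (p - p0)) ≤ 160/10000 := by nlinarith
    have a11 : q K (star y * (p - p0) * y) ≤ 320/10000 := by
      have := q_nonneg (K := K) (star y * (p - p0)); nlinarith
    have a12 : q K (S * y) * q K (S * y) ≤ 1/10000 := by nlinarith
    linarith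
  · have hSL : S ∈ L := hL.star_mem hxL
    have hfL : f ∈ L := by rw [hf]; exact hL.sub_mem (hL.add_mem hwL hwL) (hL.mul_left _ hwL)
    exact hL.add_mem (hL.add_mem (hL.sub_mem (hL.sub_mem (hL.sub_mem hfL (hL.mul_left _ hSL)) hxL) hSL)
      (hL.mul_left _ hwL)) (hL.mul_left _ hSL)

/-- half of the sum of an element and its adjoint -/
lemma sa_le {m : B} (hm : IsSelfAdjoint m) {ρ : B} (hρ : star ρ = ρ) {c : ℝ} (h : ‖m‖ ≤ c) :
    ρ * m * ρ ≤ c • (ρ * ρ) := by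
  have h1 := CStarAlgebra.star_left_conjugate_le_norm_smul (a := ρ) (b := m) (hb := hm)
  rw [hρ] at h1
  refine h1.trans ?_
  have : 0 ≤ ρ * ρ := by have := star_mul_self_nonneg ρ; rwa [hρ] at this
  exact smul_le_smul_of_nonneg_right h this

noncomputable def wf (κ t : ℝ) : ℝ := max (min (2 * t / κ - 1) 1) 0
noncomputable def sf (κ t : ℝ) : ℝ := √((wf κ t + wf κ t - wf κ t * wf κ t) / max t (κ / 2))

lemma wf_mem (κ t : ℝ) : 0 ≤ wf κ t ∧ wf κ t ≤ 1 := by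
  unfold wf; exact ⟨le_max_right _ _, max_le (min_le_right _ _) zero_le_one⟩
lemma wf_CZ (κ : ℝ) : CZ (wf κ) := by
  constructor
  · unfold wf; fun_prop
  · unfold wf; norm_num
lemma wf_one {κ t : ℝ} (hκ : 0 < κ) (h : κ ≤ t) : wf κ t = 1 := by
  unfold wf
  have : 1 ≤ 2 * t / κ - 1 := by
    have : 2 ≤ 2 * t / κ := by rw [le_div_iff₀ hκ]; linarith
    linarith
  rw [min_eq_right this, max_eq_left zero_le_one]
lemma wf_zero {κ t : ℝ} (hκ : 0 < κ) (h : t ≤ κ / 2) : wf κ t = 0 := by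
  unfold wf
  have : 2 * t / κ - 1 ≤ 0 := by
    have : 2 * t / κ ≤ 1 := by rw [div_le_iff₀ hκ]; linarith
    linarith
  exact max_eq_right ((min_le_left _ _).trans this)
lemma sf_CZ {κ : ℝ} (hκ : 0 < κ) : CZ (sf κ) := by
  constructor
  · unfold sf
    have := (wf_CZ κ).1
    refine Real.continuous_sqrt.comp (Continuous.div (by fun_prop) (by fun_prop) fun t => ?_)
    have := le_max_right t (κ / 2)
    linarith
  · unfold sf; rw [(wf_CZ κ).2]; simp
lemma sf_id {κ : ℝ} (hκ : 0 < κ) (t : ℝ) :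
    sf κ t * t * sf κ t = wf κ t + wf κ t - wf κ t * wf κ t := by
  have h1 := le_max_right t (κ / 2)
  have h0 := wf_mem κ t
  have : sf κ t * t * sf κ t = (sf κ t) ^ 2 * t := by ring
  rw [this]
  unfold sf
  rw [Real.sq_sqrt (div_nonneg (by nlinarith) (by linarith))]
  rcases le_total t (κ / 2) with h | h
  · rw [wf_zero hκ h]; simp
  · rw [max_eq_left h, div_mul_cancel₀]; linarith

lemma proj_lemma (hK : IsIdeal K) {g : B} (hg : 0 ≤ g) {κ : ℝ} (hκ : 0 < κ) (h : Sub2 K g (cut κ g)) :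
    ∃ p : B, 0 ≤ p ∧ star p = p ∧ p * p - p ∈ K ∧ p ∈ idealGen {g} ∧ Sub K (cut κ g) p := by
  have hid := fc_id (IsSelfAdjoint.of_nonneg hg)
  have hw := wf_CZ κ
  have hs := sf_CZ hκ
  have hr : CZ (fun t => √(max (t - κ) 0)) := ⟨by fun_prop, by simp [hκ.le]⟩
  set w := fc (wf κ) g with hwd
  set ψ := fc (sf κ) g with hψ
  set ρ := fc (fun t => √(max (t - κ) 0)) g with hρ
  set f := w + w - w * w with hf
  have hfeq : f = fc (fun t => wf κ t + wf κ t - wf κ t * wf κ t) g := by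
    rw [hf, hwd, fc_mul hw hw, fc_add hw hw, fc_sub (hw.add hw) (hw.mul hw)]
  have hfC := (hw.add hw).sub (hw.mul hw)
  have hρs : star ρ = ρ := fc_star _ _
  have hψs : star ψ = ψ := fc_star _ _
  have hρρ : ρ * ρ = cut κ g := by
    rw [hρ, fc_mul hr hr]; unfold cut; congr 1; funext t
    exact Real.mul_self_sqrt (le_max_right _ _)
  have hwρ : w * ρ = ρ := by
    rw [hwd, hρ, fc_mul hw hr]
    congr 1; funext t
    rcases le_total t κ with h | h
    · rw [max_eq_right (by linarith)]; simp
    · rw [wf_one hκ h, one_mul]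
  have hρfρ : ρ * f * ρ = ρ * ρ := by
    have : ρ * w = ρ := by
      have := congrArg star hwρ
      rwa [star_mul, hρs, hwd, fc_star] at this
    have e : f * ρ = ρ := by rw [hf, sub_mul, add_mul, mul_assoc, hwρ, hwρ]; abel
    rw [mul_assoc, e]
  have hψgψ : ψ * g * ψ = f := by
    nth_rewrite 1 [← hid]
    rw [hfeq, hψ, fc_mul hs CZ.id, fc_mul (hs.mul CZ.id) hs]
    congr 1; funext t; exact sf_id hκ t
  obtain ⟨δ, hδ, hδ'⟩ := exists_small (‖ψ‖ * ‖ψ‖) (ε := 1/10000) (by norm_num)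
  obtain ⟨x0, y0, h1, h2, h3⟩ := h δ hδ
  have key : ∀ a b : B, star (ρ * a * ψ) * (ρ * b * ψ) = ψ * (star a * cut κ g * b) * ψ := by
    intro a b
    rw [← hρρ]; simp only [star_mul, hρs, hψs, mul_assoc]
  have est : ∀ z : B, q K z < δ → q K (ψ * z * ψ) ≤ 1/10000 := by
    intro z hz
    have e := q_conj hK ψ z ψ
    rw [hψs] at e
    have := mul_nonneg (norm_nonneg ψ) (norm_nonneg ψ)
    nlinarith
  have est2 : ∀ a : B, q K (g - star a * cut κ g * a) < δ →
      q K (star (ρ * a * ψ) * (ρ * a * ψ) - f) ≤ 1/10000 := by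
    intro a ha
    rw [key, ← hψgψ, ← sub_mul, ← mul_sub]
    refine est _ ?_
    rwa [q_sub_comm hK]
  obtain ⟨p, hp, hps, hpp, hpq, hpL⟩ := proj_core hK (w := w) (f := f) (x := ρ * x0 * ψ) (y := ρ * y0 * ψ)
    (fc_star _ _) hf (fc_norm_sa zero_le_one fun t => by
      rw [abs_of_nonneg (wf_mem κ t).1]; exact (wf_mem κ t).2)
    (by
      rw [hfeq]
      refine fc_norm_sa zero_le_one fun t => ?_
      obtain ⟨a, b⟩ := wf_mem κ t
      rw [abs_of_nonneg (by nlinarith)]; nlinarith)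
    (by rw [mul_assoc, ← mul_assoc, hwρ]) (by rw [mul_assoc, ← mul_assoc, hwρ]) (est2 _ h1) (est2 _ h2)
    (by rw [key]; exact est _ h3)
  refine ⟨p, hp, hps, hpp, ?_, ?_⟩
  · have hI := isIdeal_gen ({g} : Set B)
    exact hpL _ hI (fc_mem hI (mem_gen g) _) (hI.mul_left _ (fc_mem hI (mem_gen g) _))
  · generalize ρ * y0 * ψ = y at hpq
    obtain ⟨k, hk, hkn⟩ := (q_lt_iff hK).1 hpq
    set T := star (y * ρ) * p * (y * ρ) with hT
    have hT0 : 0 ≤ T := star_left_conjugate_nonneg hp _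
    set e := f - star y * p * y with he
    have hes : star e = e := by
      have hfs : star f = f := by rw [hfeq]; exact fc_star _ _
      rw [he, star_sub, star_mul, star_mul, star_star, hps, hfs, mul_assoc]
    set k' := (1/2 : ℝ) • (k + star k) with hk'
    have hk'K : k' ∈ K := hK.rsmul_mem _ (hK.add_mem hk (hK.star_mem hk))
    have hk's : star k' = k' := by rw [hk', star_smul, star_add, star_star, add_comm]; simp
    have hn : ‖e - k'‖ ≤ 1/4 := by
      have e1 : e - k' = (1/2 : ℝ) • ((e - k) + star (e - k)) := by
        rw [star_sub, hes, hk']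
        have : e = (1/2 : ℝ) • (e + e) := by rw [← two_smul ℝ e, smul_smul]; norm_num
        nth_rewrite 1 [this]
        rw [← smul_sub]; congr 1; abel
      rw [e1, norm_smul]
      have := norm_add_le (e - k) (star (e - k))
      rw [norm_star] at this
      have h12 : ‖(1/2 : ℝ)‖ = 1/2 := by norm_num
      rw [h12]; linarith
    have hle := sa_le (m := e - k') (show star _ = _ by rw [star_sub, hes, hk's]) hρs hn
    have hE : ρ * (e - k') * ρ = ρ * ρ - T - ρ * k' * ρ := by
      rw [← hρfρ, he, hT, star_mul, hρs]
      simp only [mul_sub, sub_mul, mul_assoc]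
    rw [hE] at hle
    have hfin : cut κ g ≤ (4/3 : ℝ) • T + (4/3 : ℝ) • (ρ * k' * ρ) := by
      rw [← hρρ, ← sub_nonneg]
      have h5 : 0 ≤ (4/3 : ℝ) • ((1/4 : ℝ) • (ρ * ρ) - (ρ * ρ - T - ρ * k' * ρ)) :=
        smul_nonneg (by norm_num) (sub_nonneg.2 hle)
      convert h5 using 1
      simp only [smul_sub, smul_smul]
      have : ρ * ρ = (1 : ℝ) • (ρ * ρ) := (one_smul _ _).symm
      module
    have h6 : Sub K (cut κ g) ((4/3 : ℝ) • T) :=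
      sub_of_le_mod hK (cut_nonneg _ _) (smul_nonneg (by norm_num) hT0)
        (hK.rsmul_mem _ (hK.mul_right _ (hK.mul_left _ hk'K))) hfin
    exact (Sub.of_smul_right hK (by norm_num) h6).trans hK (Sub.of_eq hK hT)

end P5
end KM

set_option linter.unusedSectionVars false
set_option linter.unusedVariables false
namespace KM
section P6
variable {B : Type*} [NonUnitalCStarAlgebra B] [PartialOrder B] [StarOrderedRing B]
variable {K : Set B}

/-- the key hypothesis: enough projections modulo ideals -/
def HP (B : Type*) [NonUnitalCStarAlgebra B] [PartialOrder B] : Prop :=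
  ∀ K : Set B, IsIdeal K → ∀ h : B, 0 ≤ h → h ∉ K → ∃ p : B, 0 ≤ p ∧ p ∉ K ∧ p * p - p ∈ K ∧
    Sub2 K p h ∧ ∀ g : B, 0 ≤ g → g ∈ idealGen {p} → Sub K g p

/-- approximate separation modulo an ideal -/
def Good (ε : ℝ) (a b : B) (K : Set B) : Prop :=
  ∃ c d E E' : B, q K E < ε ∧ q K E' < ε ∧ a ≤ star (a * c) * (a * c) + E ∧
    b ≤ star (b * d) * (b * d) + E' ∧ q K (star (a * c) * (b * d)) < ε

lemma q_isum_lt {L : Set B} (hK : IsIdeal K) (hL : IsIdeal L) {E : B} {ε : ℝ} (h : q (isum K L) E < ε) :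
    ∃ l ∈ L, q K (E - l) < ε := by
  obtain ⟨z, hz, h1⟩ := (q_lt_iff (isIdeal_isum hK hL)).1 h
  obtain ⟨_, ⟨k, hk, l, hl, rfl⟩, h2⟩ := Metric.mem_closure_iff.1 hz (ε - ‖E - z‖) (by linarith)
  refine ⟨l, hl, (q_lt_iff hK).2 ⟨k, hk, ?_⟩⟩
  rw [dist_eq_norm] at h2
  have : E - l - k = (E - z) + (z - (k + l)) := by abel
  rw [this]
  linarith [norm_add_le (E - z) (z - (k + l))]

lemma q_chain_lt {c : Set (Set B)} (hne : c.Nonempty) (hc : IsChain (· ⊆ ·) c)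
    (hI : ∀ K ∈ c, IsIdeal K) {E : B} {ε : ℝ} (h : q (closure (⋃₀ c)) E < ε) : ∃ J ∈ c, q J E < ε := by
  obtain ⟨z, hz, h1⟩ := (q_lt_iff (isIdeal_chain hne hc hI)).1 h
  obtain ⟨k, ⟨J, hJ, hk⟩, h2⟩ := Metric.mem_closure_iff.1 hz (ε - ‖E - z‖) (by linarith)
  refine ⟨J, hJ, (q_lt_iff (hI J hJ)).2 ⟨k, hk, ?_⟩⟩
  rw [dist_eq_norm] at h2
  have : E - k = (E - z) + (z - k) := by abel
  rw [this]
  linarith [norm_add_le (E - z) (z - k)]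

lemma good_chain {ε : ℝ} {a b : B} {c : Set (Set B)} (hne : c.Nonempty) (hc : IsChain (· ⊆ ·) c)
    (hI : ∀ K ∈ c, IsIdeal K) (h : Good ε a b (closure (⋃₀ c))) : ∃ J ∈ c, Good ε a b J := by
  obtain ⟨x, y, E, E', h1, h2, h3, h4, h5⟩ := h
  obtain ⟨J1, hJ1, e1⟩ := q_chain_lt hne hc hI h1
  obtain ⟨J2, hJ2, e2⟩ := q_chain_lt hne hc hI h2
  obtain ⟨J3, hJ3, e3⟩ := q_chain_lt hne hc hI h5
  obtain ⟨J4, hJ4, s1, s2⟩ : ∃ J ∈ c, J1 ⊆ J ∧ J2 ⊆ J := by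
    rcases hc.total hJ1 hJ2 with h | h
    · exact ⟨J2, hJ2, h, subset_rfl⟩
    · exact ⟨J1, hJ1, subset_rfl, h⟩
  obtain ⟨J, hJ, s3, s4⟩ : ∃ J ∈ c, J3 ⊆ J ∧ J4 ⊆ J := by
    rcases hc.total hJ3 hJ4 with h | h
    · exact ⟨J4, hJ4, h, subset_rfl⟩
    · exact ⟨J3, hJ3, subset_rfl, h⟩
  exact ⟨J, hJ, x, y, E, E', (q_mono (hI _ hJ1) (s1.trans s4) _).trans_lt e1,
    (q_mono (hI _ hJ2) (s2.trans s4) _).trans_lt e2, h3, h4, (q_mono (hI _ hJ3) s3 _).trans_lt e3⟩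

lemma q_cj_le (hK : IsIdeal K) {u : B} (hu : 0 ≤ u) (hu1 : ‖u‖ ≤ 1) (m : B) : q K (cj u m) ≤ q K m := by
  refine le_of_forall_pos_le_add fun ε hε => ?_
  obtain ⟨k, hk, h⟩ := (q_lt_iff hK (x := m) (r := q K m + ε)).1 (by linarith)
  have hk' : cj u k ∈ K := by
    unfold cj
    exact hK.add_mem (hK.sub_mem (hK.sub_mem hk (hK.mul_left _ hk)) (hK.mul_right _ hk))
      (hK.mul_right _ (hK.mul_left _ hk))
  have h1 := q_le_of_mem (x := cj u m) hk'
  rw [← cj_sub] at h1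
  have h2 := norm_cj_le hu hu1 (m - k)
  linarith

lemma amgm (A D : B) {δ : ℝ} (hδ : 0 < δ) :
    star (A + D) * (A + D) ≤ (1 + δ) • (star A * A) + (1 + 1 / δ) • (star D * D) := by
  rw [← sub_nonneg]
  have h := star_mul_self_nonneg (√δ • A - (1 / √δ) • D)
  have hs : √δ * √δ = δ := Real.mul_self_sqrt hδ.le
  have hs0 : √δ ≠ 0 := (Real.sqrt_pos.2 hδ).ne'
  have hs1 : 1 / √δ * (1 / √δ) = 1 / δ := by rw [div_mul_div_comm, hs, one_mul]
  have hs2 : √δ * (1 / √δ) = 1 := mul_one_div_cancel hs0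
  have hs3 : 1 / √δ * √δ = 1 := by rw [mul_comm, hs2]
  convert h using 1
  simp only [star_sub, star_smul, star_add, mul_add, add_mul, mul_sub, sub_mul, smul_mul_assoc, mul_smul_comm,
    smul_sub, smul_add, smul_smul, star_trivial, hs, hs1, hs2, hs3]
  module

lemma half (hK : IsIdeal K) {a x E0 l u r r0 : B} {δ s ε1 τ η η2 : ℝ} (ha : 0 ≤ a) (hx : a ≤ star x * x + E0)
    (hu : 0 ≤ u) (hu1 : ‖u‖ ≤ 1) (hl : q K (E0 - l) ≤ ε1) (hlu : ‖l - u * l‖ ≤ τ) (hδ : 0 < δ) (hs : 0 ≤ s)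
    (hss : s * s = 1 + δ) (hr : r0 ≤ star r * r) (hg : q K ((1 + 1 / δ) • (u * a * u) - r0) ≤ η)
    (hc : q K (star (x - x * u) * r) ≤ η2) :
    ∃ E : B, a ≤ star (s • (x - x * u) + r) * (s • (x - x * u) + r) + E ∧
      q K E ≤ (1 + δ) * (ε1 + τ) + 2 * s * η2 + η := by
  have hus : star u = u := (IsSelfAdjoint.of_nonneg hu).star_eq
  set X := x - x * u with hX
  set E := (1 + δ) • cj u E0 + ((1 + 1 / δ) • (u * a * u) - r0) - s • (star X * r + star r * X) with hE
  refine ⟨E, ?_, ?_⟩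
  · have h1 : a ≤ (1 + δ) • cj u a + (1 + 1 / δ) • (u * a * u) := by
      obtain ⟨t, -, ht, rfl⟩ := exists_sqrt ha
      have := amgm (t - t * u) (t * u) hδ
      rw [cj_star_mul hus, sub_add_cancel, ht] at this
      convert this using 3
      rw [star_mul, ht, hus]; simp only [mul_assoc]
    have h2 : cj u a ≤ star X * X + cj u E0 := by
      rw [hX, cj_star_mul hus, ← cj_add]; exact cj_le hus hx
    have h3 : (1 + δ) • cj u a ≤ (1 + δ) • (star X * X + cj u E0) :=
      smul_le_smul_of_nonneg_left h2 (by linarith)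
    have h4 : a ≤ (1 + δ) • (star X * X + cj u E0) + (1 + 1 / δ) • (u * a * u) + (star r * r - r0) :=
      (h1.trans (add_le_add_left h3 _)).trans (le_add_of_nonneg_right (sub_nonneg.2 hr))
    refine h4.trans (le_of_eq ?_)
    rw [hE]
    simp only [star_add, star_smul, star_trivial, mul_add, add_mul, smul_mul_assoc, mul_smul_comm, smul_smul, hss,
      smul_add]
    abel
  · have e1 : q K (cj u E0) ≤ ε1 + τ := by
      have : cj u E0 = cj u (E0 - l) + cj u l := by rw [← cj_add, sub_add_cancel]
      rw [this]
      have a1 := q_add hK (cj u (E0 - l)) (cj u l)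
      have a2 := q_cj_le hK hu hu1 (E0 - l)
      have a3 := q_le_norm hK (cj u l)
      have a4 : ‖cj u l‖ ≤ τ := by rw [cj_eq]; exact (norm_sub_mul_le' hu hu1 _).trans hlu
      linarith
    have e2 : q K (star r * X) ≤ η2 := by
      have : star r * X = star (star X * r) := by rw [star_mul, star_star]
      rw [this, q_star hK]; exact hc
    have b1 := q_sub hK ((1 + δ) • cj u E0 + ((1 + 1 / δ) • (u * a * u) - r0)) (s • (star X * r + star r * X))
    have b2 := q_add hK ((1 + δ) • cj u E0) ((1 + 1 / δ) • (u * a * u) - r0)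
    have b3 := q_rsmul_le hK (c := 1 + δ) (by linarith) (cj u E0)
    have b4 := q_rsmul_le hK hs (star X * r + star r * X)
    have b5 := q_add hK (star X * r) (star r * X)
    have b6 : (1 + δ) * q K (cj u E0) ≤ (1 + δ) * (ε1 + τ) := mul_le_mul_of_nonneg_left e1 (by linarith)
    have b7 : s * q K (star X * r + star r * X) ≤ s * (2 * η2) := mul_le_mul_of_nonneg_left (by linarith) hs
    rw [hE]
    linarith

lemma kappa (hK : IsIdeal K) {p g z : B} {R τ1 τ3 : ℝ} (hp : 0 ≤ p) (hpp : p * p - p ∈ K) (hgp : Sub K g p)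
    (hgR : ‖g‖ + 1 ≤ R) (hz : q K (p - z) ≤ τ1) (h30 : 0 < τ3) (h31 : τ3 ≤ 1) :
    ∃ κ : B, q K κ ≤ R ∧ q K (g - star κ * p * z * p * κ) ≤ τ3 + R * R * τ1 := by
  have hps : star p = p := (IsSelfAdjoint.of_nonneg hp).star_eq
  obtain ⟨k, hk⟩ := hgp τ3 h30
  have hR1 : 1 ≤ R := by linarith [norm_nonneg g]
  have hqp : q K p ≤ 1 := by
    have h1 := q_sq_le hK p
    rw [hps, q_congr hK hpp] at h1
    nlinarith [q_nonneg (K := K) p]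
  have hκ : q K (p * k) ≤ R := by
    have h1 := q_sq_le hK (p * k)
    have h2 : q K (star (p * k) * (p * k)) = q K (star k * p * k) := by
      refine q_congr hK ?_
      have : star (p * k) * (p * k) - star k * p * k = star k * (p * p - p) * k := by
        rw [star_mul, hps]; simp only [mul_sub, sub_mul, mul_assoc]
      rw [this]; exact hK.mul_right _ (hK.mul_left _ hpp)
    rw [h2] at h1
    have h3 := q_sub hK g (g - star k * p * k)
    rw [sub_sub_cancel] at h3
    have h4 := q_le_norm hK g
    nlinarith [q_nonneg (K := K) (p * k)]
  refine ⟨p * k, hκ, ?_⟩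
  set κ := p * k with hκd
  have h3 : p * p * p - p ∈ K := by
    have : p * p * p - p = (p * p - p) * p + (p * p - p) := by simp only [sub_mul]; abel
    rw [this]; exact hK.add_mem (hK.mul_right _ hpp) hpp
  have h5 : p * (p * p * p) * p - p ∈ K := by
    have : p * (p * p * p) * p - p = p * (p * p * p - p) * p + (p * p * p - p) := by
      simp only [mul_sub, sub_mul]; abel
    rw [this]; exact hK.add_mem (hK.mul_right _ (hK.mul_left _ h3)) h3
  have e : g - star κ * p * z * p * κ = (g - star k * p * k) - star k * (p * (p * p * p) * p - p) * k
      + star κ * (p * (p - z) * p) * κ := by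
    rw [hκd, star_mul, hps]
    simp only [mul_sub, sub_mul, mul_assoc]; abel
  rw [e]
  have a1 := q_add hK ((g - star k * p * k) - star k * (p * (p * p * p) * p - p) * k) (star κ * (p * (p - z) * p) * κ)
  have a2 := q_sub hK (g - star k * p * k) (star k * (p * (p * p * p) * p - p) * k)
  have a3 : q K (star k * (p * (p * p * p) * p - p) * k) = 0 :=
    q_eq_zero hK (hK.mul_right _ (hK.mul_left _ h5))
  have n1 := q_nonneg (K := K) (p - z)
  have n2 := q_nonneg (K := K) p
  have n3 := q_nonneg (K := K) κ
  have a4 : q K (p * (p - z) * p) ≤ τ1 := by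
    have c1 := q_mul hK (p * (p - z)) p
    have c2 := q_mul hK p (p - z)
    have c3 := q_nonneg (K := K) (p * (p - z))
    nlinarith
  have a5 : q K (star κ * (p * (p - z) * p) * κ) ≤ R * R * τ1 := by
    have c1 := q_mul hK (star κ * (p * (p - z) * p)) κ
    have c2 := q_mul hK (star κ) (p * (p - z) * p)
    rw [q_star hK] at c2
    have c3 := q_nonneg (K := K) (p * (p - z) * p)
    have c4 : q K κ * q K (p * (p - z) * p) ≤ R * τ1 := mul_le_mul hκ a4 c3 (by linarith)
    have c5 : q K (star κ * (p * (p - z) * p)) * q K κ ≤ (R * τ1) * R :=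
      mul_le_mul (c2.trans c4) hκ n3 (by nlinarith)
    linarith
  linarith

lemma WV (hK : IsIdeal K) {a b : B} (ha : 0 ≤ a) (hb : 0 ≤ b) (hab : a * b ∉ K) :
    ∃ (W0 V0 h : B) (C : ℝ), 0 ≤ h ∧ h ∉ K ∧ 0 ≤ C ∧ star (a * W0) * (b * V0) = C • h ∧
      h ≤ star (a * W0) * (a * W0) ∧ h ≤ star (b * V0) * (b * V0) := by
  have has : star a = a := (IsSelfAdjoint.of_nonneg ha).star_eq
  have hbs : star b = b := (IsSelfAdjoint.of_nonneg hb).star_eq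
  set h := b * a * b with hh
  have hh0 : 0 ≤ h := by have := star_left_conjugate_nonneg ha b; rwa [hbs] at this
  have hhK : h ∉ K := by
    intro hcon
    obtain ⟨r, -, hr, hrr⟩ := exists_sqrt ha
    have : star (r * b) * (r * b) ∈ K := by
      have e : star (r * b) * (r * b) = h := by rw [star_mul, hr, hbs, hh, ← hrr]; simp only [mul_assoc]
      rwa [e]
    have h1 := hK.mul_left r (mem_of_star_mul_mem hK this)
    rw [← mul_assoc, hrr] at h1
    exact hab h1
  obtain ⟨η, hη, hσK⟩ := exists_cut hK hh0 hhK
  set σ := cut η h with hσ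
  have hσs : star σ = σ := fc_star _ _
  have hid := fc_id (IsSelfAdjoint.of_nonneg hh0)
  have hC := cut_CZ hη.le
  set h' := σ * h * σ with hh'
  have e' : h' = fc (fun t => max (t - η) 0 * t * max (t - η) 0) h := by
    rw [hh', hσ]; unfold cut
    rw [← fc_mul (hC.mul CZ.id) hC, ← fc_mul hC CZ.id, hid]
  have h'0 : 0 ≤ h' := by have := star_left_conjugate_nonneg hh0 σ; rwa [hσs] at this
  have h'K : h' ∉ K := by
    intro hcon
    have h3 : σ * σ * σ = fc (fun t => max (t - η) 0 * max (t - η) 0 * max (t - η) 0) h := by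
      rw [hσ]; unfold cut
      rw [fc_mul hC hC, fc_mul (hC.mul hC) hC]
    have h30 : 0 ≤ σ * σ * σ := by
      rw [h3]; exact fc_nonneg_sa fun t => by positivity
    have hle : σ * σ * σ ≤ h' := by
      rw [h3, e']
      refine fc_le ((hC.mul hC).mul hC) ((hC.mul CZ.id).mul hC) hh0 fun t ht _ => ?_
      have h1 : max (t - η) 0 ≤ t := max_le (by linarith) ht
      have h2 : 0 ≤ max (t - η) 0 := le_max_right _ _
      exact mul_le_mul_of_nonneg_right (mul_le_mul_of_nonneg_left h1 h2) h2
    have h4 := mem_of_le hK h30 hle hcon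
    have h5 : (σ * σ) * (σ * σ) ∈ K := by
      have := hK.mul_right σ h4
      simpa only [mul_assoc] using this
    exact hσK (sqrt_mem hK hσs (sqrt_mem hK (by rw [star_mul, hσs]) h5))
  set C := ‖a‖ + ‖b * b‖ / η with hCd
  have hC0 : 0 ≤ C := by positivity
  have hV : h' ≤ C • (star (b * σ) * (b * σ)) := by
    have h1 : h ≤ ‖a‖ • (b * b) := sa_le (IsSelfAdjoint.of_nonneg ha) hbs le_rfl
    have h2 := star_left_conjugate_le_conjugate h1 σ
    rw [hσs] at h2
    have h3 : σ * (‖a‖ • (b * b)) * σ = ‖a‖ • (star (b * σ) * (b * σ)) := by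
      rw [star_mul, hσs, hbs]; simp only [mul_smul_comm, smul_mul_assoc, mul_assoc]
    rw [h3] at h2
    refine h2.trans (smul_le_smul_of_nonneg_right ?_ (star_mul_self_nonneg _))
    have : 0 ≤ ‖b * b‖ / η := by positivity
    linarith
  have hW : h' ≤ C • (star (a * (b * σ)) * (a * (b * σ))) := by
    have h1 : h * h ≤ ‖b * b‖ • (b * (a * a) * b) := by
      have hbb : IsSelfAdjoint (b * b) := by show star _ = _; rw [star_mul, hbs]
      have k1 := CStarAlgebra.star_left_conjugate_le_norm_smul (a := a * b) (b := b * b) (hb := hbb)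
      rw [star_mul, has, hbs] at k1
      convert k1 using 1
      · rw [hh]; simp only [mul_assoc]
      · simp only [mul_assoc]
    have h2 := star_left_conjugate_le_conjugate h1 σ
    rw [hσs] at h2
    have h3 : σ * (‖b * b‖ • (b * (a * a) * b)) * σ = ‖b * b‖ • (star (a * (b * σ)) * (a * (b * σ))) := by
      rw [star_mul, star_mul, hσs, hbs, has]; simp only [mul_smul_comm, smul_mul_assoc, mul_assoc]
    rw [h3] at h2
    have h4 : η • h' ≤ σ * (h * h) * σ := by
      have e2 : σ * (h * h) * σ = fc (fun t => max (t - η) 0 * (t * t) * max (t - η) 0) h := by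
        rw [hσ]; unfold cut
        rw [← fc_mul (hC.mul (CZ.id.mul CZ.id)) hC, ← fc_mul hC (CZ.id.mul CZ.id), ← fc_mul CZ.id CZ.id, hid]
      rw [e2, e', fc_smul _ ((hC.mul CZ.id).mul hC)]
      refine fc_le (((hC.mul CZ.id).mul hC).smul _) ((hC.mul (CZ.id.mul CZ.id)).mul hC) hh0 fun t ht _ => ?_
      rcases le_total t η with h | h
      · rw [max_eq_right (by linarith)]; simp
      · rw [max_eq_left (by linarith)]
        have : 0 ≤ (t - η) * (t - η) * t * (t - η) := by
          have : 0 ≤ t - η := by linarith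
          positivity
        linarith
    have h5 := smul_le_smul_of_nonneg_left (h4.trans h2) (inv_nonneg.2 hη.le)
    rw [smul_smul, inv_mul_cancel₀ hη.ne', one_smul, smul_smul] at h5
    refine h5.trans (smul_le_smul_of_nonneg_right ?_ (star_mul_self_nonneg _))
    rw [hCd, div_eq_inv_mul]; linarith [norm_nonneg a]
  have hsq : √C * √C = C := Real.mul_self_sqrt hC0
  have esm : ∀ x y : B, star (√C • x) * (√C • y) = C • (star x * y) := by
    intro x y
    rw [star_smul, smul_mul_smul_comm, star_trivial, hsq]
  refine ⟨√C • (b * σ), √C • σ, h', C, h'0, h'K, hC0, ?_, ?_, ?_⟩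
  · rw [mul_smul_comm, mul_smul_comm, esm]
    congr 1
    rw [star_mul, star_mul, has, hbs, hσs, hh', hh]; simp only [mul_assoc]
  · rw [mul_smul_comm, esm]; exact hW
  · rw [mul_smul_comm, esm]; exact hV

end P6
end KM

set_option linter.unusedSectionVars false
set_option linter.unusedVariables false
namespace KM
section P7
variable {B : Type*} [NonUnitalCStarAlgebra B] [PartialOrder B] [StarOrderedRing B]
variable {K : Set B}

lemma self_approx {a : B} (ha : 0 ≤ a) {ε : ℝ} (hε : 0 < ε) :
    ∃ c E : B, ‖E‖ < ε ∧ a ≤ star (a * c) * (a * c) + E ∧ star c = c := by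
  have has : star a = a := (IsSelfAdjoint.of_nonneg ha).star_eq
  have hid := fc_id (IsSelfAdjoint.of_nonneg ha)
  set η := ε / 4 with hη
  have hη0 : 0 < η := by positivity
  have hC : CZ (fun t => √t / (|t| + η)) := by
    constructor
    · refine Real.continuous_sqrt.div (by fun_prop) fun t => ?_
      have := abs_nonneg t; linarith
    · simp
  set c := fc (fun t => √t / (|t| + η)) a with hc
  have hcs : star c = c := fc_star _ _
  refine ⟨c, a - star (a * c) * (a * c), ?_, by simp, hcs⟩
  have e : a - star (a * c) * (a * c) = fc (fun t => t - (√t / (|t| + η) * t) * (t * (√t / (|t| + η)))) a := by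
    rw [star_mul, has, hcs, ← fc_sub CZ.id ((hC.mul CZ.id).mul (CZ.id.mul hC)), ← fc_mul (hC.mul CZ.id) (CZ.id.mul hC),
      ← fc_mul hC CZ.id, ← fc_mul CZ.id hC, hid]
  rw [e]
  refine lt_of_le_of_lt (fc_norm ha (c := 2 * η) (by positivity) fun t ht _ => ?_) (by linarith)
  rw [abs_of_nonneg ht]
  have h1 : √t / (t + η) * t * (t * (√t / (t + η))) = t * (t / (t + η)) ^ 2 := by
    have := Real.mul_self_sqrt ht
    field_simp
    rw [Real.sq_sqrt ht]; ring
  rw [h1]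
  have h0 : 0 < t + η := by linarith
  have h2 : t / (t + η) ≤ 1 := (div_le_one h0).2 (by linarith)
  have h3 : 0 ≤ t / (t + η) := by positivity
  have h4 : t * (1 - t / (t + η)) ≤ η := by
    have : t * (1 - t / (t + η)) = (t / (t + η)) * η := by field_simp; ring
    rw [this]; nlinarith
  have h5 : 0 ≤ t * (1 - t / (t + η)) := mul_nonneg ht (by linarith)
  rw [abs_of_nonneg (by nlinarith)]
  nlinarith

lemma good_of_mul_mem (hK : IsIdeal K) {a b : B} (ha : 0 ≤ a) (hb : 0 ≤ b) (hab : a * b ∈ K) {ε : ℝ} (hε : 0 < ε) :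
    Good ε a b K := by
  have has : star a = a := (IsSelfAdjoint.of_nonneg ha).star_eq
  obtain ⟨c, E, h1, h2, h3⟩ := self_approx ha hε
  obtain ⟨d, E', h4, h5, h6⟩ := self_approx hb hε
  refine ⟨c, d, E, E', (q_le_norm hK _).trans_lt h1, (q_le_norm hK _).trans_lt h4, h2, h5, ?_⟩
  rw [q_eq_zero hK]
  · exact hε
  · have : star (a * c) * (b * d) = star c * (a * b) * d := by rw [star_mul, has]; simp only [mul_assoc]
    rw [this]; exact hK.mul_right _ (hK.mul_left _ hab)

lemma cross (hK : IsIdeal K) {x u W x1 p κ : B} {τ R : ℝ} (hus : star u = u)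
    (hZ : ‖star x * (W * x1 * p) - u * (star x * (W * x1 * p))‖ ≤ τ) (hτ : 0 ≤ τ) (hκ : q K κ ≤ R) :
    q K (star (x - x * u) * (W * x1 * p * κ)) ≤ τ * R := by
  have e : star (x - x * u) * (W * x1 * p * κ)
      = (star x * (W * x1 * p) - u * (star x * (W * x1 * p))) * κ := by
    rw [star_sub, star_mul, hus]; simp only [sub_mul, mul_assoc]
  rw [e]
  refine (q_mul hK _ _).trans ?_
  exact mul_le_mul ((q_le_norm hK _).trans hZ) hκ (q_nonneg _) hτ

lemma r_le {W h z x1 p κ : B} (hp : star p = p) (hh : h ≤ star W * W) (hz : z = star x1 * h * x1) :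
    star κ * p * z * p * κ ≤ star (W * x1 * p * κ) * (W * x1 * p * κ) := by
  have := star_left_conjugate_le_conjugate hh (x1 * p * κ)
  convert this using 1
  · rw [hz]; simp only [star_mul, hp, mul_assoc]
  · simp only [star_mul, hp, mul_assoc]

lemma norm_conj_le {u : B} (hu1 : ‖u‖ ≤ 1) (e : B) : ‖u * e * u‖ ≤ ‖e‖ := by
  have k1 := norm_mul_le (u * e) u
  have k2 := norm_mul_le u e
  have k3 := norm_nonneg e
  have k4 := norm_nonneg (u * e)
  have k5 := norm_nonneg u
  nlinarith

lemma q_kpzpk (hK : IsIdeal K) {p z κ1 κ2 : B} {R τ1 : ℝ} (hps : star p = p) (hpp : p * p - p ∈ K)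
    (hκ1 : q K κ1 ≤ R) (hκ2 : q K κ2 ≤ R) (hz : q K z ≤ τ1) :
    q K (star κ1 * (p * z * p) * κ2) ≤ R * R * τ1 := by
  have hqp : q K p ≤ 1 := by
    have h1 := q_sq_le hK p
    rw [hps, q_congr hK hpp] at h1
    nlinarith [q_nonneg (K := K) p]
  have n0 := q_nonneg (K := K) z
  have n2 := q_nonneg (K := K) p
  have hR : 0 ≤ R := (q_nonneg _).trans hκ1
  have hτ : 0 ≤ τ1 := n0.trans hz
  have a4 : q K (p * z * p) ≤ τ1 := by
    have c1 := q_mul hK (p * z) p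
    have c2 := q_mul hK p z
    have c3 := q_nonneg (K := K) (p * z)
    nlinarith
  have c1 := q_mul hK (star κ1 * (p * z * p)) κ2
  have c2 := q_mul hK (star κ1) (p * z * p)
  rw [q_star hK] at c2
  have c3 := q_nonneg (K := K) (p * z * p)
  have c4 : q K κ1 * q K (p * z * p) ≤ R * τ1 := mul_le_mul hκ1 a4 c3 hR
  have c5 : q K (star κ1 * (p * z * p)) * q K κ2 ≤ (R * τ1) * R :=
    mul_le_mul (c2.trans c4) hκ2 (q_nonneg _) (by positivity)
  linarith

set_option maxHeartbeats 1000000 in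
lemma step (hHP : HP B) (hK : IsIdeal K) {a b : B} (ha : 0 ≤ a) (hb : 0 ≤ b) {ε : ℝ} (hε : 0 < ε)
    (hab : a * b ∉ K) (hmax : ∀ K' : Set B, IsIdeal K' → K ⊆ K' → ¬ K' ⊆ K → Good ε a b K') :
    Good ε a b K := by
  classical
  obtain ⟨W0, V0, h, C, hh0, hhK, hC0, hWV, hW, hV⟩ := WV hK ha hb hab
  obtain ⟨p, hp0, hpK, hpp, hph, hpg⟩ := hHP K hK h hh0 hhK
  have hps : star p = p := (IsSelfAdjoint.of_nonneg hp0).star_eq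
  have hL := isIdeal_gen ({p} : Set B)
  have hpL : p ∈ idealGen {p} := mem_gen p
  obtain ⟨c, d, E, E', hE, hE', hx, hy, hxy⟩ := hmax (isum K (idealGen {p})) (isIdeal_isum hK hL)
    (left_subset_isum hL) (fun hcon => hpK (hcon (right_subset_isum hK hpL)))
  obtain ⟨l1, hl1, hE1⟩ := q_isum_lt hK hL hE
  obtain ⟨l2, hl2, hE2⟩ := q_isum_lt hK hL hE'
  obtain ⟨l3, hl3, hE3⟩ := q_isum_lt hK hL hxy
  set x := a * c with hxd
  set y := b * d with hyd
  set W := a * W0 with hWd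
  set V := b * V0 with hVd
  obtain ⟨ε1, hε1, hε10, b1, b2, b3⟩ : ∃ ε1 : ℝ, ε1 < ε ∧ 0 ≤ ε1 ∧ q K (E - l1) ≤ ε1 ∧ q K (E' - l2) ≤ ε1 ∧
      q K (star x * y - l3) ≤ ε1 :=
    ⟨max (max (q K (E - l1)) (q K (E' - l2))) (q K (star x * y - l3)), max_lt (max_lt hE1 hE2) hE3,
      le_max_of_le_right (q_nonneg _), (le_max_left _ _).trans (le_max_left _ _),
      (le_max_right _ _).trans (le_max_left _ _), le_max_right _ _⟩
  obtain ⟨δ, hδ, hδ1, hδε⟩ : ∃ δ : ℝ, 0 < δ ∧ δ ≤ 1 ∧ (1 + δ) * ε1 < ε := by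
    obtain ⟨δ, h1, h2⟩ := exists_small ε1 (sub_pos.2 hε1)
    refine ⟨min δ 1, lt_min h1 one_pos, min_le_right _ _, ?_⟩
    nlinarith [min_le_left δ 1]
  set s := √(1 + δ) with hs
  have hs0 : 0 ≤ s := Real.sqrt_nonneg _
  have hss : s * s = 1 + δ := Real.mul_self_sqrt (by linarith)
  have hs2 : s ≤ 2 := by nlinarith
  set ε3 := ε - (1 + δ) * ε1 with hε3
  have hε30 : 0 < ε3 := by rw [hε3]; linarith
  set G := 1 + 1 / δ with hG
  have hG0 : 0 ≤ G := by positivity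
  set R := G * (‖a‖ + ‖b‖) + 1 with hR
  have hR1 : 1 ≤ R := by
    have : 0 ≤ G * (‖a‖ + ‖b‖) := by positivity
    linarith
  obtain ⟨τ1, hτ1, hτ1'⟩ := exists_small (R * R * (1 + C)) (ε := ε3 / 4) (by positivity)
  obtain ⟨x1, x2, g1, g2, g3⟩ := hph τ1 hτ1
  obtain ⟨τ2, hτ2, hτ2'⟩ := exists_small (2 + 4 * R) (ε := ε3 / 4) (by positivity)
  obtain ⟨u, huL, hu0, hus, hu1, hu⟩ := exists_au hL
    ({l1, l2, l3, star x * (W * x1 * p), star x * (V * x2 * p), star y * (W * x1 * p), star y * (V * x2 * p)} : Finset B)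
    (by
      have hm : ∀ z t : B, z * (t * p) ∈ idealGen {p} := fun z t => hL.mul_left _ (hL.mul_left _ hpL)
      simp only [Finset.mem_insert, Finset.mem_singleton]
      rintro l (rfl | rfl | rfl | rfl | rfl | rfl | rfl)
      · exact hl1
      · exact hl2
      · exact hl3
      all_goals exact hm _ _) hτ2
  have ul1 := (hu l1 (by simp)).2
  have ul2 := (hu l2 (by simp)).2
  have ul3 := (hu l3 (by simp)).2
  have u1 := (hu (star x * (W * x1 * p)) (by simp)).2
  have u2 := (hu (star x * (V * x2 * p)) (by simp)).2
  have u3 := (hu (star y * (W * x1 * p)) (by simp)).2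
  have u4 := (hu (star y * (V * x2 * p)) (by simp)).2
  clear hu
  have gen : ∀ e : B, 0 ≤ e → ‖e‖ ≤ ‖a‖ + ‖b‖ → 0 ≤ G • (u * e * u) ∧ G • (u * e * u) ∈ idealGen {p} ∧
      ‖G • (u * e * u)‖ + 1 ≤ R := by
    intro e he hen
    refine ⟨smul_nonneg hG0 ?_, hL.rsmul_mem _ (hL.mul_left _ huL), ?_⟩
    · have := star_left_conjugate_nonneg he u; rwa [hus] at this
    · rw [norm_smul, Real.norm_eq_abs, abs_of_nonneg hG0, hR]
      have h1 : ‖u * e * u‖ ≤ ‖e‖ := norm_conj_le hu1 e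
      have := mul_le_mul_of_nonneg_left (h1.trans hen) hG0
      linarith
  obtain ⟨τ3, hτ30, hτ31, hτ3⟩ : ∃ τ3 : ℝ, 0 < τ3 ∧ τ3 ≤ 1 ∧ τ3 ≤ ε3 / 4 :=
    ⟨min 1 (ε3 / 4), lt_min one_pos (by linarith), min_le_left _ _, min_le_right _ _⟩
  obtain ⟨ga0, gaL, gaR⟩ := gen a ha (by linarith [norm_nonneg b])
  obtain ⟨gb0, gbL, gbR⟩ := gen b hb (by linarith [norm_nonneg a])
  obtain ⟨κ1, hκ1, hk1⟩ := kappa hK hp0 hpp (hpg _ ga0 gaL) gaR g1.le hτ30 hτ31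
  obtain ⟨κ2, hκ2, hk2⟩ := kappa hK hp0 hpp (hpg _ gb0 gbL) gbR g2.le hτ30 hτ31
  have cr1 := cross hK (κ := κ1) hus u1 hτ2.le hκ1
  have cr2 := cross hK (κ := κ2) hus u2 hτ2.le hκ2
  have cr3 := cross hK (κ := κ1) hus u3 hτ2.le hκ1
  have cr4 := cross hK (κ := κ2) hus u4 hτ2.le hκ2
  obtain ⟨E1, hE1a, hE1q⟩ := half hK ha hx hu0 hu1 b1 ul1 hδ hs0 hss (r_le hps hW rfl) hk1 cr1
  obtain ⟨E2, hE2a, hE2q⟩ := half hK hb hy hu0 hu1 b2 ul2 hδ hs0 hss (r_le hps hV rfl) hk2 cr4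
  have hRR : 0 ≤ R * R * τ1 := by positivity
  have hRC : 0 ≤ C * (R * R * τ1) := by positivity
  have hτR : 0 ≤ τ2 * R := by positivity
  have hsτ : s * (τ2 * R) ≤ 2 * (τ2 * R) := mul_le_mul_of_nonneg_right hs2 hτR
  have hδτ : (1 + δ) * τ2 ≤ 2 * τ2 := mul_le_mul_of_nonneg_right (by linarith) hτ2.le
  have fin1 : (1 + δ) * (ε1 + τ2) + 2 * s * (τ2 * R) + (τ3 + R * R * τ1) < ε := by linarith
  have eX : s • (x - x * u) + W * x1 * p * κ1 = a * (s • (c - c * u) + W0 * x1 * p * κ1) := by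
    rw [hxd, hWd]; simp only [mul_add, mul_smul_comm, mul_sub, mul_assoc]
  have eY : s • (y - y * u) + V * x2 * p * κ2 = b * (s • (d - d * u) + V0 * x2 * p * κ2) := by
    rw [hyd, hVd]; simp only [mul_add, mul_smul_comm, mul_sub, mul_assoc]
  refine ⟨s • (c - c * u) + W0 * x1 * p * κ1, s • (d - d * u) + V0 * x2 * p * κ2, E1, E2, hE1q.trans_lt fin1,
    hE2q.trans_lt fin1, by rw [← eX]; exact hE1a, by rw [← eY]; exact hE2a, ?_⟩
  rw [← eX, ← eY]
  set X := x - x * u with hX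
  set Y := y - y * u with hY
  set r := W * x1 * p * κ1 with hr
  set r' := V * x2 * p * κ2 with hr'
  have eq : star (s • X + r) * (s • Y + r') = (1 + δ) • (star X * Y) + s • (star X * r') + s • (star r * Y)
      + star r * r' := by
    simp only [star_add, star_smul, star_trivial, mul_add, add_mul, smul_mul_assoc, mul_smul_comm, smul_smul, hss,
      smul_add]
    abel
  rw [eq]
  have t1 : q K (star X * Y) ≤ ε1 + τ2 := by
    have e1 : star X * Y = cj u (star x * y - l3) + cj u l3 := by
      rw [← cj_add, sub_add_cancel, hX, hY]
      simp only [cj, star_sub, star_mul, hus, mul_sub, sub_mul, mul_assoc]; abel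
    rw [e1]
    have a1 := q_add hK (cj u (star x * y - l3)) (cj u l3)
    have a2 := q_cj_le hK hu0 hu1 (star x * y - l3)
    have a3 := q_le_norm hK (cj u l3)
    have a4 : ‖cj u l3‖ ≤ τ2 := by rw [cj_eq]; exact (norm_sub_mul_le' hu0 hu1 _).trans ul3
    linarith
  have t2 : q K (star r * Y) ≤ τ2 * R := by
    have : star r * Y = star (star Y * r) := by rw [star_mul (star Y) r, star_star]
    rw [this, q_star hK]; exact cr3
  have t3 : q K (star r * r') ≤ C * (R * R * τ1) := by
    have e1 : star r * r' = C • (star κ1 * (p * (star x1 * h * x2) * p) * κ2) := by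
      have : star r * r' = star (x1 * p * κ1) * (star W * V) * (x2 * p * κ2) := by
        rw [hr, hr']; simp only [star_mul, mul_assoc]
      rw [this, hWV]; simp only [star_mul, hps, mul_smul_comm, smul_mul_assoc, mul_assoc]
    rw [e1]
    exact (q_rsmul_le hK hC0 _).trans (mul_le_mul_of_nonneg_left (q_kpzpk hK hps hpp hκ1 hκ2 g3.le) hC0)
  have f1 := q_add hK ((1 + δ) • (star X * Y) + s • (star X * r') + s • (star r * Y)) (star r * r')
  have f2 := q_add hK ((1 + δ) • (star X * Y) + s • (star X * r')) (s • (star r * Y))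
  have f3 := q_add hK ((1 + δ) • (star X * Y)) (s • (star X * r'))
  have f4 := q_rsmul_le hK (c := 1 + δ) (by linarith) (star X * Y)
  have f5 := q_rsmul_le hK hs0 (star X * r')
  have f6 := q_rsmul_le hK hs0 (star r * Y)
  have f7 : (1 + δ) * q K (star X * Y) ≤ (1 + δ) * (ε1 + τ2) := mul_le_mul_of_nonneg_left t1 (by linarith)
  have f8 : s * q K (star X * r') ≤ s * (τ2 * R) := mul_le_mul_of_nonneg_left cr2 hs0
  have f9 : s * q K (star r * Y) ≤ s * (τ2 * R) := mul_le_mul_of_nonneg_left t2 hs0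
  linarith

lemma main_spi (hHP : HP B) : StronglyPurelyInfinite B := by
  intro a b ha hb
  have good : ∀ ε : ℝ, 0 < ε → Good ε a b {0} := by
    intro ε hε
    by_contra hcon
    obtain ⟨K, -, hK⟩ := zorn_subset_nonempty {K : Set B | IsIdeal K ∧ ¬ Good ε a b K} (by
      intro c hcS hc hne
      have hI : ∀ K ∈ c, IsIdeal K := fun K hKc => (hcS hKc).1
      refine ⟨closure (⋃₀ c), ⟨isIdeal_chain hne hc hI, fun hg => ?_⟩, fun s hs =>
        (Set.subset_sUnion_of_mem hs).trans subset_closure⟩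
      obtain ⟨J, hJ, hJg⟩ := good_chain hne hc hI hg
      exact (hcS hJ).2 hJg) {0} ⟨isIdeal_zero, hcon⟩
    obtain ⟨⟨hKI, hKg⟩, hKmax⟩ := hK
    apply hKg
    by_cases hab : a * b ∈ K
    · exact good_of_mul_mem hKI ha hb hab hε
    · refine step hHP hKI ha hb hε hab fun K' hK' hsub hns => ?_
      by_contra hng
      exact hns (hKmax (show K' ∈ {K : Set B | IsIdeal K ∧ ¬ Good ε a b K} from ⟨hK', hng⟩) hsub)
  intro ε hε
  obtain ⟨c, d, E, E', h1, h2, h3, h4, h5⟩ := good (ε / 2) (half_pos hε)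
  rw [q_zero_ideal] at h1 h2 h5
  obtain ⟨w, hw, hw2⟩ := ord_lemma ha (star_mul_self_nonneg _) (half_pos hε) h3 h1.le
  obtain ⟨v, hv, hv2⟩ := ord_lemma hb (star_mul_self_nonneg _) (half_pos hε) h4 h2.le
  refine ⟨a * c * w, b * d * v, ⟨c * w, mul_assoc _ _ _⟩, ⟨d * v, mul_assoc _ _ _⟩, ?_, ?_, ?_⟩
  · rw [norm_sub_rev, star_mul]
    calc _ = ‖a - star w * (star (a * c) * (a * c)) * w‖ := by simp only [mul_assoc]
      _ ≤ _ := by linarith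
  · rw [norm_sub_rev, star_mul]
    calc _ = ‖b - star v * (star (b * d) * (b * d)) * v‖ := by simp only [mul_assoc]
      _ ≤ _ := by linarith
  · have e : star (a * c * w) * (b * d * v) = star w * (star (a * c) * (b * d)) * v := by
      rw [star_mul (a * c) w]; simp only [mul_assoc]
    rw [e]
    have k1 := norm_mul_le (star w * (star (a * c) * (b * d))) v
    have k2 := norm_mul_le (star w) (star (a * c) * (b * d))
    rw [norm_star] at k2
    have k3 : ‖w‖ * ‖v‖ ≤ 2 := by nlinarith [sq_nonneg (‖w‖ - ‖v‖)]
    have k4 := mul_le_mul_of_nonneg_right k2 (norm_nonneg v)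
    have k5 : ‖w‖ * ‖v‖ * ‖star (a * c) * (b * d)‖ ≤ 2 * (ε / 2) :=
      mul_le_mul k3 h5.le (norm_nonneg _) (by norm_num)
    linarith

end P7
end KM

set_option linter.unusedSectionVars false
set_option linter.unusedVariables false
namespace KM
section P8
variable {B : Type*} [NonUnitalCStarAlgebra B] [PartialOrder B] [StarOrderedRing B]
variable {K : Set B}

lemma proj_nonneg {p : B} (hp : IsProjection p) : 0 ≤ p := by
  have h := star_mul_self_nonneg p
  rwa [hp.1, hp.2] at h

lemma proj_dist (hK : IsIdeal K) {p : B} (hp : IsProjection p) (h : q K p < 1) : p ∈ K := by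
  have h1 := q_mul hK p p
  rw [hp.2] at h1
  have h2 := q_nonneg (K := K) p
  have h3 : q K p = 0 := by nlinarith
  exact mem_of_q_zero hK fun ε hε => by rw [h3]; exact hε

lemma zero_sub_ideal (hK : IsIdeal K) : ({0} : Set B) ⊆ K := by
  rintro _ rfl; exact hK.zero_mem

lemma pi_sub (h : PurelyInfinite B) {a b : B} (ha : 0 ≤ a) (hb : 0 ≤ b) (hab : a ∈ idealGen {b}) :
    Sub {0} a b := by
  by_cases ha0 : a = 0
  · subst ha0; exact Sub.zero isIdeal_zero b
  by_cases hb0 : b = 0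
  · subst hb0
    exact absurd (gen_subset isIdeal_zero (a := (0 : B)) rfl hab) ha0
  exact sub_zero_iff.2 ((h.2 a b ha ha0 hb hb0).2 hab)

lemma cube_gen {b : B} (hb : 0 ≤ b) : b ∈ idealGen {b * b * b} := by
  have hbs : star b = b := (IsSelfAdjoint.of_nonneg hb).star_eq
  have hI := isIdeal_gen ({b * b * b} : Set B)
  refine mem_of_star_mul_mem hI (mem_of_star_mul_mem hI ?_)
  have : star (star b * b) * (star b * b) = b * (b * b * b) := by
    simp only [star_mul, star_star, hbs, mul_assoc]
  rw [this]
  exact hI.mul_left _ (mem_gen _)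

lemma cube_nonneg {b : B} (hb : 0 ≤ b) : 0 ≤ b * b * b := by
  have hbs : star b = b := (IsSelfAdjoint.of_nonneg hb).star_eq
  have := star_left_conjugate_nonneg hb b
  rwa [hbs] at this

lemma orth (h : PurelyInfinite B) {b c g : B} (hb : 0 ≤ b) (hc : 0 ≤ c) (hg : 0 ≤ g) (hbc : b * c = 0)
    (h1 : g ∈ idealGen {b}) (h2 : g ∈ idealGen {c}) : Sub2 {0} g (b + c) := by
  have hbs : star b = b := (IsSelfAdjoint.of_nonneg hb).star_eq
  have hcs : star c = c := (IsSelfAdjoint.of_nonneg hc).star_eq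
  have hcb : c * b = 0 := by
    have := congrArg star hbc
    simpa [star_mul, hbs, hcs] using this
  have s1 := pi_sub h hg (cube_nonneg hb) (gen_subset (isIdeal_gen _) (cube_gen hb) h1)
  have s2 := pi_sub h hg (cube_nonneg hc) (gen_subset (isIdeal_gen _) (cube_gen hc) h2)
  intro ε hε
  obtain ⟨x, hx⟩ := s1 ε hε
  obtain ⟨y, hy⟩ := s2 ε hε
  refine ⟨b * x, c * y, ?_, ?_, ?_⟩
  · convert hx using 3
    rw [star_mul, hbs]
    calc star x * b * (b + c) * (b * x) = star x * (b * b * b) * x + star x * (b * c) * (b * x) := by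
          simp only [mul_add, add_mul, mul_assoc]
      _ = _ := by rw [hbc]; simp
  · convert hy using 3
    rw [star_mul, hcs]
    calc star y * c * (b + c) * (c * y) = star y * (c * c * c) * y + star y * (c * b) * (c * y) := by
          simp only [mul_add, add_mul, mul_assoc]; abel
      _ = _ := by rw [hcb]; simp
  · have : star (b * x) * (b + c) * (c * y) = 0 := by
      rw [star_mul, hbs]
      calc star x * b * (b + c) * (c * y) = star x * b * (b * c) * y + star x * (b * c) * (c * y) := by
            simp only [mul_add, add_mul, mul_assoc]
        _ = _ := by rw [hbc]; simp
    rw [this, q_eq_zero isIdeal_zero rfl]; exact hε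

lemma ip_sep (h : IdealProperty B) {J1 J2 : Set B} (h1 : IsIdeal J1) (h2 : IsIdeal J2) (hn : ¬ J1 ⊆ J2) :
    ∃ p, IsProjection p ∧ p ∈ J1 ∧ p ∉ J2 := by
  by_contra hcon
  push Not at hcon
  apply hn
  have := h J1 (J1 ∩ J2) h1 (isIdeal_inter h1 h2) fun p hp =>
    ⟨fun hp1 => ⟨hp1, hcon p hp hp1⟩, fun hp1 => hp1.1⟩
  intro x hx
  rw [this] at hx
  exact hx.2

lemma hp_of_pi_ip (h : PurelyInfinite B) (hip : IdealProperty B) : HP B := by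
  intro K hK h' hh0 hhK
  have hG := isIdeal_gen ({h'} : Set B)
  obtain ⟨p0, hp0, hp0G, hp0K⟩ := ip_sep hip hG hK fun hs => hhK (hs (mem_gen h'))
  obtain ⟨M, hKM, ⟨⟨hM, -, hp0M⟩, hmax⟩⟩ := zorn_subset_nonempty
    {M : Set B | IsIdeal M ∧ K ⊆ M ∧ p0 ∉ M} (by
      intro c hcS hc hne
      have hI : ∀ L ∈ c, IsIdeal L := fun L hL => (hcS hL).1
      refine ⟨closure (⋃₀ c), ⟨isIdeal_chain hne hc hI, ?_, fun hmem => ?_⟩, fun s hs =>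
        (Set.subset_sUnion_of_mem hs).trans subset_closure⟩
      · obtain ⟨L, hL⟩ := hne
        exact (hcS hL).2.1.trans ((Set.subset_sUnion_of_mem hL).trans subset_closure)
      · obtain ⟨k, ⟨J, hJ, hk⟩, hd⟩ := Metric.mem_closure_iff.1 hmem 1 one_pos
        refine (hcS hJ).2.2 (proj_dist (hI J hJ) hp0 ((q_lt_iff (hI J hJ)).2 ⟨k, hk, ?_⟩))
        rwa [dist_eq_norm] at hd) K ⟨hK, subset_rfl, hp0K⟩
  have hM' : ∀ L : Set B, IsIdeal L → M ⊆ L → ∀ z ∈ L, z ∉ M → p0 ∈ L := by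
    intro L hL hML z hz hzM
    by_contra hp
    exact hzM (hmax (show L ∈ {M : Set B | IsIdeal M ∧ K ⊆ M ∧ p0 ∉ M} from ⟨hL, hKM.trans hML, hp⟩) hML hz)
  obtain ⟨b, c, hbp, hcp, hb0, hc0, hbc, hbM, hcM⟩ := char_lemma h.1 (isIdeal_gen {p0}) hM
    fun hs => hp0M (hs (mem_gen p0))
  have hbs : star b = b := (IsSelfAdjoint.of_nonneg hb0).star_eq
  have hcs : star c = c := (IsSelfAdjoint.of_nonneg hc0).star_eq
  have hcb : c * b = 0 := by
    have := congrArg star hbc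
    simpa [star_mul, hbs, hcs] using this
  obtain ⟨d, hd⟩ : ∃ d, b * d * c ∉ M := by
    by_contra hcon
    push Not at hcon
    have hS1 : IsIdeal {z : B | ∀ d, z * d * c ∈ M} := by
      refine mk_isIdeal ?_ ?_ ?_ ?_ ?_ ?_
      · have : {z : B | ∀ d, z * d * c ∈ M} = ⋂ d, (fun z => z * d * c) ⁻¹' M := by ext; simp
        rw [this]
        exact isClosed_iInter fun d => hM.isClosed.preimage (by fun_prop)
      · intro d; simpa using hM.zero_mem
      · intro x hx y hy d; rw [add_mul, add_mul]; exact hM.add_mem (hx d) (hy d)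
      · intro s x hx d; rw [smul_mul_assoc, smul_mul_assoc]; exact hM.smul_mem s (hx d)
      · intro x hx e d; rw [mul_assoc e, mul_assoc e]; exact hM.mul_left e (hx d)
      · intro x hx e d; rw [mul_assoc x]; exact hx (e * d)
    have m1 := hM' _ hS1 (fun z hz d => hM.mul_right _ (hM.mul_right _ hz)) b hcon hbM
    have hS2 : IsIdeal {z : B | ∀ d, p0 * d * z ∈ M} := by
      refine mk_isIdeal ?_ ?_ ?_ ?_ ?_ ?_
      · have : {z : B | ∀ d, p0 * d * z ∈ M} = ⋂ d, (fun z => p0 * d * z) ⁻¹' M := by ext; simp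
        rw [this]
        exact isClosed_iInter fun d => hM.isClosed.preimage (by fun_prop)
      · intro d; simpa using hM.zero_mem
      · intro x hx y hy d; rw [mul_add]; exact hM.add_mem (hx d) (hy d)
      · intro s x hx d; rw [mul_smul_comm]; exact hM.smul_mem s (hx d)
      · intro x hx e d; rw [← mul_assoc, mul_assoc p0]; exact hx (d * e)
      · intro x hx e d; rw [← mul_assoc]; exact hM.mul_right e (hx d)
    have m2 := hM' _ hS2 (fun z hz d => hM.mul_left _ hz) c m1 hcM p0
    rw [hp0.2, hp0.2] at m2
    exact hp0M m2
  set x := b * d * c with hx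
  have hxx : x * x = 0 := by
    calc x * x = b * d * (c * b) * (d * c) := by rw [hx]; simp only [mul_assoc]
      _ = 0 := by rw [hcb]; simp
  have hI1 := isIdeal_gen ({star x * x} : Set B)
  have hI2 := isIdeal_gen ({x * star x} : Set B)
  have x1 : x ∈ idealGen {star x * x} := mem_of_star_mul_mem hI1 (mem_gen _)
  have x2 : x ∈ idealGen {x * star x} := by
    have : star x ∈ idealGen {x * star x} := mem_of_star_mul_mem hI2 (by rw [star_star]; exact mem_gen _)
    simpa using hI2.star_mem this
  obtain ⟨e, he, heI, heM⟩ := ip_sep hip hI1 hM fun hs => hd (hs x1)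
  have he0 := proj_nonneg he
  have e2 : e ∈ idealGen {x * star x} := gen_subset hI2 (hI2.mul_left (star x) x2) heI
  have xG : x ∈ idealGen {h'} :=
    hG.mul_right _ (hG.mul_right _ (gen_subset hG hp0G hbp))
  have n1 := star_mul_self_nonneg x
  have n2 := mul_star_self_nonneg x
  have s1 : Sub2 {0} e (star x * x + x * star x) := by
    refine orth h n1 n2 he0 ?_ heI e2
    calc star x * x * (x * star x) = star x * (x * x) * star x := by simp only [mul_assoc]
      _ = 0 := by rw [hxx]; simp
  have s2 : Sub {0} (star x * x + x * star x) h' :=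
    pi_sub h (add_nonneg n1 n2) hh0 (hG.add_mem (hG.mul_left _ xG) (hG.mul_right _ xG))
  refine ⟨e, he0, fun hk => heM (hKM hk), ?_, (s1.of_right isIdeal_zero s2).mono isIdeal_zero (zero_sub_ideal hK),
    fun g hg hge => (pi_sub h hg he0 hge).mono isIdeal_zero (zero_sub_ideal hK)⟩
  rw [he.2, sub_self]; exact hK.zero_mem

lemma ip_of_fin (h : PurelyInfinite B) (hfin : {J : Set B | IsIdeal J}.Finite) : IdealProperty B := by
  have key : ∀ J1 J2 : Set B, IsIdeal J1 → IsIdeal J2 → ¬ J1 ⊆ J2 → ∃ p, IsProjection p ∧ p ∈ J1 ∧ p ∉ J2 := by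
    intro J1 J2 h1 h2 hn
    obtain ⟨L, hL⟩ := (hfin.subset (t := {L : Set B | IsIdeal L ∧ L ⊆ J1 ∧ ¬ L ⊆ J2}) fun L hL => hL.1).exists_minimal
      ⟨J1, h1, subset_rfl, hn⟩
    obtain ⟨⟨hLI, hL1, hL2⟩, hmin⟩ := hL
    have hgen : ∀ z ∈ L, z ∉ J2 → L ⊆ idealGen {z} := by
      intro z hz hz2
      have hs := gen_subset hLI hz
      exact hmin (show idealGen {z} ∈ {L : Set B | IsIdeal L ∧ L ⊆ J1 ∧ ¬ L ⊆ J2} from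
        ⟨isIdeal_gen _, hs.trans hL1, fun hh => hz2 (hh (mem_gen z))⟩) hs
    obtain ⟨b, c, hbL, hcL, hb0, hc0, hbc, hb2, hc2⟩ := char_lemma h.1 hLI h2 hL2
    obtain ⟨κ, hκ, hcut⟩ := exists_cut h2 hb0 hb2
    have s1 := orth h hb0 hc0 hb0 hbc (mem_gen b) (hgen c hcL hc2 hbL)
    have s2 : Sub {0} (b + c) (cut κ b) := pi_sub h (add_nonneg hb0 hc0) (cut_nonneg κ b)
      (hgen _ (cut_mem hLI hbL κ) hcut (hLI.add_mem hbL hcL))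
    obtain ⟨p, hp0, hps, hpp, hpg, hpc⟩ := proj_lemma isIdeal_zero hb0 hκ (s1.of_right isIdeal_zero s2)
    exact ⟨p, ⟨hps, sub_eq_zero.1 hpp⟩, hL1 (gen_subset hLI hbL hpg), fun hp2 => hcut (hpc.mem h2 hp2)⟩
  intro J1 J2 h1 h2 hp
  by_contra hne
  by_cases h12 : J1 ⊆ J2
  · obtain ⟨p, hpr, ha, hb⟩ := key J2 J1 h2 h1 fun h21 => hne (h12.antisymm h21)
    exact hb ((hp p hpr).2 ha)
  · obtain ⟨p, hpr, ha, hb⟩ := key J1 J2 h1 h2 h12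
    exact hb ((hp p hpr).1 ha)

lemma supp_sep {A : Set B} (hApos : ResiduallySupports {a : B | a ∈ A ∧ 0 ≤ a}) {J1 J2 : Set B}
    (h1 : IsIdeal J1) (h2 : IsIdeal J2) (h : J1 ∩ A ⊆ J2) : J1 ⊆ J2 := by
  intro x hx
  by_contra hx2
  obtain ⟨a, ⟨haA, ha0⟩, han, hsub⟩ := hApos (J1 ∩ J2) (isIdeal_inter h1 h2) (star x * x) trivial
    (star_mul_self_nonneg x) fun hh => hx2 (mem_of_star_mul_mem h2 hh.2)
  have hS : Sub (J1 ∩ J2) a (star x * x) := fun ε hε => (hsub ε hε).imp fun y hy => hy.2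
  have ha1 : a ∈ J1 := (hS.mono (isIdeal_inter h1 h2) Set.inter_subset_left).mem_mod h1 (h1.mul_left _ hx)
  exact han ⟨ha1, h ⟨ha1, haA⟩⟩

lemma supp_F {A F : Set B} (hA : IsSubCStar A) (hApos : ResiduallySupports {a : B | a ∈ A ∧ 0 ≤ a})
    (hFA : F ⊆ {a : B | a ∈ A ∧ 0 ≤ a}) (hFsupp : ResiduallySupportsIn A F) {J : Set B} (hJ : IsIdeal J)
    {b : B} (hb : 0 ≤ b) (hbJ : b ∉ J) : ∃ f ∈ F, f ∉ J ∧ Sub J f b := by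
  obtain ⟨a, ⟨haA, ha0⟩, haJ, hsub⟩ := hApos J hJ b trivial hb hbJ
  have hS : Sub J a b := fun ε hε => (hsub ε hε).imp fun y hy => hy.2
  have hJA : IsIdealIn A (J ∩ A) := by
    obtain ⟨a1, a2, a3, a4, a5, a6⟩ := hA
    refine ⟨Set.inter_subset_right, hJ.isClosed.inter a1, ⟨hJ.zero_mem, a2⟩, ?_, ?_, ?_⟩
    · intro x hx y hy; exact ⟨hJ.add_mem hx.1 hy.1, a3 _ hx.2 _ hy.2⟩
    · intro c x hx; exact ⟨hJ.smul_mem c hx.1, a4 _ _ hx.2⟩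
    · intro x hx c hc
      exact ⟨⟨hJ.mul_left c hx.1, a5 _ hc _ hx.2⟩, ⟨hJ.mul_right c hx.1, a5 _ hx.2 _ hc⟩⟩
  obtain ⟨f, hf, hfJ, hfs⟩ := hFsupp (J ∩ A) hJA a haA ha0 fun hh => haJ hh.1
  refine ⟨f, hf, fun hh => hfJ ⟨hh, (hFA hf).1⟩, Sub.trans hJ (fun ε hε => ?_) hS⟩
  obtain ⟨x, -, hx⟩ := hfs ε hε
  exact ⟨x, (Metric.infDist_le_infDist_of_subset Set.inter_subset_left ⟨0, hJA.2.2.1⟩).trans_lt hx⟩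

lemma supp_F' {A F : Set B} (hA : IsSubCStar A) (hApos : ResiduallySupports {a : B | a ∈ A ∧ 0 ≤ a})
    (hFA : F ⊆ {a : B | a ∈ A ∧ 0 ≤ a}) (hFsupp : ResiduallySupportsIn A F) (hK : IsIdeal K)
    {b : B} (hb : 0 ≤ b) (hbK : b ∉ K) : ∃ f ∈ F, f ∉ K ∧ f ∈ idealGen {b} ∧ Sub K f b := by
  have hG := isIdeal_gen ({b} : Set B)
  have hI := isIdeal_inter hK hG
  obtain ⟨f, hf, hfI, hs⟩ := supp_F hA hApos hFA hFsupp hI hb fun hh => hbK hh.1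
  have hfG : f ∈ idealGen {b} := (hs.mono hI Set.inter_subset_right).mem_mod hG (mem_gen b)
  exact ⟨f, hf, fun hk => hfI ⟨hk, hfG⟩, hfG, hs.mono hI Set.inter_subset_left⟩

lemma pi_F {F : Set B} (h0 : ∀ f ∈ F, 0 ≤ f) (h : ∀ a ∈ F, a ≠ 0 → ProperlyInfinite a) (hK : IsIdeal K) {f : B}
    (hf : f ∈ F) : Sub2 K f f := by
  have : Sub2 {0} f f := by
    by_cases hf0 : f = 0
    · subst hf0
      intro ε hε
      refine ⟨0, 0, ?_, ?_, ?_⟩ <;> simpa [q_zero_ideal] using hε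
    · exact properlyInfinite_sub2 (h0 f hf) (h f hf hf0)
  exact this.mono isIdeal_zero (zero_sub_ideal hK)

lemma hp_of_F {A F : Set B} (hA : IsSubCStar A) (hApos : ResiduallySupports {a : B | a ∈ A ∧ 0 ≤ a})
    (hFA : F ⊆ {a : B | a ∈ A ∧ 0 ≤ a}) (hFsupp : ResiduallySupportsIn A F)
    (hsep : {J : Set B | IsIdeal J}.Finite ∨
      ∀ I₁ I₂ : Set B, IsRestricted A I₁ → IsRestricted A I₂ →
        (∀ p ∈ F, IsProjection p → (p ∈ I₁ ↔ p ∈ I₂)) → I₁ = I₂)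
    (hpi : ∀ a ∈ F, a ≠ 0 → ProperlyInfinite a) : HP B := by
  have hF0 : ∀ f ∈ F, 0 ≤ f := fun f hf => (hFA hf).2
  have hF2 : ∀ {L : Set B}, IsIdeal L → ∀ f ∈ F, Sub2 L f f := fun hL f hf => pi_F hF0 hpi hL hf
  have hsF : ∀ {L : Set B}, IsIdeal L → ∀ f ∈ F, ∀ g, 0 ≤ g → g ∈ idealGen {f} → Sub L g f :=
    fun hL f hf g hg hgf => pic hL (hF0 f hf) (hF2 hL f hf) hg hgf
  intro K hK h' hh0 hhK
  obtain hfin | hproj := hsep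
  · have hfin' : {J : Set B | ∃ f ∈ F, f ∉ K ∧ Sub K f h' ∧ J = idealGen {f}}.Finite :=
      hfin.subset (by rintro _ ⟨f, -, -, -, rfl⟩; exact isIdeal_gen _)
    obtain ⟨J, hJ⟩ := hfin'.exists_minimal (by
      obtain ⟨f, hf, hfK, -, hfs⟩ := supp_F' hA hApos hFA hFsupp hK hh0 hhK
      exact ⟨_, f, hf, hfK, hfs, rfl⟩)
    obtain ⟨⟨f, hf, hfK, hfs, rfl⟩, hmin⟩ := hJ
    have hG := isIdeal_gen ({f} : Set B)
    obtain ⟨κ, hκ, hcut⟩ := exists_cut hK (hF0 f hf) hfK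
    obtain ⟨f2, hf2, hf2K, hf2G, hf2s⟩ := supp_F' hA hApos hFA hFsupp hK (cut_nonneg κ f) hcut
    have c1 : cut κ f ∈ idealGen {f} := cut_mem hG (mem_gen f) κ
    have s3 : Sub K (cut κ f) f := hsF hK f hf _ (cut_nonneg κ f) c1
    have hs2 : idealGen {f2} ⊆ idealGen {f} := gen_subset hG (gen_subset hG c1 hf2G)
    have hff2 : f ∈ idealGen {f2} := hmin
      (show idealGen {f2} ∈ {J : Set B | ∃ f ∈ F, f ∉ K ∧ Sub K f h' ∧ J = idealGen {f}} from
      ⟨f2, hf2, hf2K, (hf2s.trans hK s3).trans hK hfs, rfl⟩) hs2 (mem_gen f)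
    have s4 : Sub2 K f (cut κ f) :=
      ((hF2 hK f2 hf2).of_left hK (hsF hK f2 hf2 f (hF0 f hf) hff2)).of_right hK hf2s
    have s5 : Sub K f (cut κ f) := (hsF hK f2 hf2 f (hF0 f hf) hff2).trans hK hf2s
    obtain ⟨p, hp0, hps, hpp, hpG, hpc⟩ := proj_lemma hK (hF0 f hf) hκ s4
    refine ⟨p, hp0, fun hpK => hcut (hpc.mem_mod hK hpK), hpp,
      ((hF2 hK f hf).of_left hK (hsF hK f hf p hp0 hpG)).of_right hK hfs, fun g hg hgp => ?_⟩
    exact ((hsF hK f hf g hg (gen_subset hG hpG hgp)).trans hK s5).trans hK hpc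
  · obtain ⟨f, hf, hfK, -, hfs⟩ := supp_F' hA hApos hFA hFsupp hK hh0 hhK
    have hG := isIdeal_gen ({f} : Set B)
    obtain ⟨p, hpF, hp, hpG, hpK⟩ : ∃ p ∈ F, IsProjection p ∧ p ∈ idealGen {f} ∧ p ∉ K := by
      by_contra hcon
      push Not at hcon
      have he := hproj (idealGen {f} ∩ A) ((idealGen {f} ∩ K) ∩ A) ⟨_, hG, rfl⟩ ⟨_, isIdeal_inter hG hK, rfl⟩
        fun p hpF hp => ⟨fun hh => ⟨⟨hh.1, hcon p hpF hp hh.1⟩, hh.2⟩, fun hh => ⟨hh.1.1, hh.2⟩⟩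
      have hm : f ∈ idealGen {f} ∩ A := ⟨mem_gen f, (hFA hf).1⟩
      rw [he] at hm
      exact hfK hm.1.2
    have hp0 := hF0 p hpF
    refine ⟨p, hp0, hpK, by rw [hp.2, sub_self]; exact hK.zero_mem,
      ((hF2 hK p hpF).of_right hK (hsF hK f hf p hp0 hpG)).of_right hK hfs, fun g hg hgp => hsF hK p hpF g hg hgp⟩

lemma pi_of_spi (h : StronglyPurelyInfinite B) : PurelyInfinite B := by
  refine ⟨spi_no_char h, fun a b ha _ hb _ => ⟨fun hab => ?_, fun hab => ?_⟩⟩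
  · exact (sub_zero_iff.2 hab).mem (isIdeal_gen _) (mem_gen b)
  · exact sub_zero_iff.1 (pic isIdeal_zero hb (properlyInfinite_sub2 hb (h b b hb hb)) ha hab)

end P8
end KM

open KM

variable {B : Type*} [NonUnitalCStarAlgebra B] [PartialOrder B] [StarOrderedRing B]


/-- If `A⁺` residually supports `B`, `F ⊆ A⁺` residually supports the C*-algebra `A`, and
either the set of restricted ideals of `A` is finite or the projections in `F` separate the
restricted ideals of `A`, then: every nonzero element of `F` is properly infinite in `B` ↔
`B` is purely infinite ↔ `B` is purely infinite with the ideal property ↔ `B` is strongly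
purely infinite. -/
theorem stmt0 (A : Set B) (hA : IsSubCStar A)
    (hApos : ResiduallySupports {a : B | a ∈ A ∧ 0 ≤ a})
    (F : Set B) (hFA : F ⊆ {a : B | a ∈ A ∧ 0 ≤ a})
    (hFsupp : ResiduallySupportsIn A F)
    (hsep : {I : Set B | IsRestricted A I}.Finite ∨
      ∀ I₁ I₂ : Set B, IsRestricted A I₁ → IsRestricted A I₂ →
        (∀ p ∈ F, IsProjection p → (p ∈ I₁ ↔ p ∈ I₂)) → I₁ = I₂) :
    List.TFAE [∀ a ∈ F, a ≠ 0 → ProperlyInfinite a,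
      PurelyInfinite B,
      PurelyInfinite B ∧ IdealProperty B,
      StronglyPurelyInfinite B] := by
  have hsepI : ∀ J1 J2 : Set B, IsIdeal J1 → IsIdeal J2 → J1 ∩ A = J2 ∩ A → J1 = J2 := by
    intro J1 J2 h1 h2 he
    refine (supp_sep hApos h1 h2 ?_).antisymm (supp_sep hApos h2 h1 ?_)
    · rw [he]; exact Set.inter_subset_left
    · rw [← he]; exact Set.inter_subset_left
  have hsep' : {J : Set B | IsIdeal J}.Finite ∨
      ∀ I₁ I₂ : Set B, IsRestricted A I₁ → IsRestricted A I₂ →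
        (∀ p ∈ F, IsProjection p → (p ∈ I₁ ↔ p ∈ I₂)) → I₁ = I₂ := by
    refine hsep.imp_left fun hfin => ?_
    exact Set.Finite.of_injOn (f := fun J : Set B => J ∩ A) (t := {I : Set B | IsRestricted A I}) (fun J hJ => show IsRestricted A (J ∩ A) from ⟨J, hJ, rfl⟩)
      (fun J1 h1 J2 h2 he => hsepI J1 J2 h1 h2 he) hfin
  tfae_have 1 → 4 := fun h => main_spi (hp_of_F hA hApos hFA hFsupp hsep' h)
  tfae_have 4 → 1 := fun h a ha _ => h a a (hFA ha).2 (hFA ha).2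
  tfae_have 4 → 2 := pi_of_spi
  tfae_have 3 → 2 := fun h => h.1
  tfae_have 3 → 4 := fun h => main_spi (hp_of_pi_ip h.1 h.2)
  tfae_have 2 → 3 := by
    intro h
    refine ⟨h, ?_⟩
    obtain hfin | hproj := hsep'
    · exact ip_of_fin h hfin
    · intro J1 J2 h1 h2 hp
      refine hsepI J1 J2 h1 h2 (hproj _ _ ⟨J1, h1, rfl⟩ ⟨J2, h2, rfl⟩ fun p _ hpr => ?_)
      exact and_congr_left' (hp p hpr)
  tfae_finish
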